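/- arXiv:2407.09830 — 2 statements merged into one kernel-verified Lean document; each statement's English description precedes it below -/
import Mathlib

section
/- Let U⊆ℂ be open, a∈ℝ\{0}, b>0, and let f:U×[b,∞)→ℂ satisfy: (i) z↦f(z,y) is holomorphic on U for every y∈[b,∞); (ii) there exist n∈ℕ, α≥0 with n>α+1 such that f(z,·)∈C_α^n([b,∞)) for every z∈U and the norm ‖f(z,·)‖_{C_α^n([b,∞))} is locally bounded on U. Then for every z∈U and y₀∈ℝ the limit ψ(z) := lim_{ε→0⁺} ∫_b^∞ e^{−ε(y−y₀)²} e^{iay²} f(z,y) dy exists, is independent of y₀, and the function ψ is holomorphic on U. -/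
open Set Filter MeasureTheory Topology

noncomputable section

/-- Membership in the space `C_α^n([b,∞))`: `f` is `n`-times continuously differentiable
on `[b,∞)` and its `n`-th derivative satisfies a polynomial bound `M·y^α`. -/
def MemCnAlpha (b : ℝ) (n : ℕ) (α : ℝ) (f : ℝ → ℂ) : Prop :=
  ContDiffOn ℝ n f (Set.Ici b) ∧
    ∃ M : ℝ, 0 ≤ M ∧ ∀ y ∈ Set.Ici b, ‖iteratedDerivWithin n f (Set.Ici b) y‖ ≤ M * y ^ α

/-- The norm on the space `C_α^n([b,∞))`. -/
def CnAlphaNorm (b : ℝ) (n : ℕ) (α : ℝ) (f : ℝ → ℂ) : ℝ :=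
  (∑ k ∈ Finset.range n, ‖iteratedDerivWithin k f (Set.Ici b) b‖ / b ^ ((n : ℝ) - k + α)) +
    ⨆ y : Set.Ici b, ‖iteratedDerivWithin n f (Set.Ici b) y‖ / (y : ℝ) ^ α

/- Integrate by parts `n` times, each time replacing the exponential by its primitive taken from
infinity along the complex direction `|a| + i a`, in which it decays. The `j`-th primitive is
`O(y ^ (-j))` uniformly in `ε` and converges as `ε → 0⁺` to a limit independent of `y₀`. As
`n > α + 1`, the regularized integrals therefore converge in the dual norm of `C_α^n([b,∞))`, hence
locally uniformly in `z`, and the limit inherits holomorphy. -/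

section ParametricIntegral

variable {X E : Type*} [MeasurableSpace X] {μ : Measure X} [NormedAddCommGroup E]

theorem aestronglyMeasurable_of_hasDerivAt {𝕜 : Type*} [NontriviallyNormedField 𝕜]
    [NormedSpace 𝕜 E] {F : 𝕜 → X → E} {F' : X → E} {z : 𝕜}
    (hF : ∀ᶠ w in 𝓝 z, AEStronglyMeasurable (F w) μ)
    (hF' : ∀ᵐ x ∂μ, HasDerivAt (F · x) (F' x) z) : AEStronglyMeasurable F' μ := by
  obtain ⟨w, hwz, hw⟩ := exists_seq_forall_of_frequently
    (hF.filter_mono (nhdsWithin_le_nhds (s := {z}ᶜ))).frequently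
  refine aestronglyMeasurable_of_tendsto_ae atTop (f := fun k x => slope (F · x) z (w k))
    (fun k => ((hw k).sub hF.self_of_nhds).const_smul _) ?_
  filter_upwards [hF'] with x hx using (hasDerivAt_iff_tendsto_slope.mp hx).comp hwz

variable [NormedSpace ℂ E] {F : ℂ → X → E} {g : X → ℝ} {s : Set ℂ} {z : ℂ}

/- Cauchy's estimate turns the bound on `F` into a bound on its derivative. -/
theorem hasDerivAt_integral_of_dominated_of_differentiableOn (hs : s ∈ 𝓝 z)
    (hF : ∀ w ∈ s, AEStronglyMeasurable (F w) μ)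
    (hdiff : ∀ᵐ x ∂μ, DifferentiableOn ℂ (F · x) s) (hg : Integrable g μ)
    (hbound : ∀ᵐ x ∂μ, ∀ w ∈ s, ‖F w x‖ ≤ g x) :
    Integrable (fun x => deriv (F · x) z) μ ∧
      HasDerivAt (fun w => ∫ x, F w x ∂μ) (∫ x, deriv (F · x) z ∂μ) z := by
  obtain ⟨r, hr, hrs⟩ := Metric.mem_nhds_iff.mp hs
  have hderiv : ∀ᵐ x ∂μ, ∀ w ∈ Metric.ball z (r / 2), HasDerivAt (F · x) (deriv (F · x) w) w := by
    filter_upwards [hdiff] with x hx w hw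
    have hws : w ∈ Metric.ball z r := Metric.ball_subset_ball (by linarith) hw
    exact ((hx.mono hrs).differentiableAt (Metric.isOpen_ball.mem_nhds hws)).hasDerivAt
  have hcauchy : ∀ᵐ x ∂μ, ∀ w ∈ Metric.ball z (r / 2), ‖deriv (F · x) w‖ ≤ g x / (r / 4) := by
    filter_upwards [hdiff, hbound] with x hx hgx w hw
    have hsub : Metric.closedBall w (r / 4) ⊆ s :=
      (Metric.closedBall_subset_ball' (by linarith [Metric.mem_ball.mp hw])).trans hrs
    refine Complex.norm_deriv_le_of_forall_mem_sphere_norm_le (by positivity) ?_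
      fun u hu => hgx u (hsub (Metric.sphere_subset_closedBall hu))
    exact (hx.mono (Metric.closure_ball_subset_closedBall.trans hsub)).diffContOnCl
  have hmeas := Filter.eventually_of_mem hs hF
  have hz : z ∈ Metric.ball z (r / 2) := Metric.mem_ball_self (by positivity)
  exact hasDerivAt_integral_of_dominated_loc_of_deriv_le
    (Metric.ball_mem_nhds z (by positivity)) hmeas
    (hg.mono' (hF z (mem_of_mem_nhds hs)) (hbound.mono fun x hx => hx z (mem_of_mem_nhds hs)))
    (aestronglyMeasurable_of_hasDerivAt hmeas (hderiv.mono fun x hx => hx z hz))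
    hcauchy (hg.div_const _) hderiv

end ParametricIntegral

theorem tendstoLocallyUniformlyOn_of_norm_sub_le {ι X E : Type*} [TopologicalSpace X]
    [SeminormedAddCommGroup E] {F : ι → X → E} {G : X → E} {N : X → ℝ} {R : ι → ℝ} {l : Filter ι}
    {s : Set X} (hF : ∀ᶠ i in l, ∀ x ∈ s, ‖F i x - G x‖ ≤ N x * R i)
    (hN : ∀ x ∈ s, ∃ M, ∀ᶠ w in 𝓝[s] x, N w ≤ M) (hR₀ : ∀ i, 0 ≤ R i)
    (hR : Tendsto R l (𝓝 0)) : TendstoLocallyUniformlyOn F G l s := by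
  rw [Metric.tendstoLocallyUniformlyOn_iff]
  intro δ hδ x hx
  obtain ⟨M, hM⟩ := hN x hx
  refine ⟨{w | w ∈ s ∧ N w ≤ M}, inter_mem self_mem_nhdsWithin hM, ?_⟩
  have hMR : Tendsto (fun i => M * R i) l (𝓝 0) := by simpa using hR.const_mul M
  filter_upwards [hF, hMR.eventually_lt_const hδ] with i hi hlt w ⟨hws, hwM⟩
  rw [dist_comm, dist_eq_norm]
  calc ‖F i w - G w‖ ≤ N w * R i := hi w hws
    _ ≤ M * R i := mul_le_mul_of_nonneg_right hwM (hR₀ i)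
    _ < δ := hlt

section RayPrimitive

variable {E : Type*} [NormedAddCommGroup E] [NormedSpace ℂ E]

/-- The primitive of `F` obtained by integrating along the ray `w + t ω`, `t ≥ 0`, from infinity
back to `w`. It is used for functions decaying along that ray. -/
def rayPrimitive (ω : ℂ) (F : ℂ → E) (w : ℂ) : E :=
  -(ω • ∫ t in Ioi (0 : ℝ), F (w + t * ω))

variable {ω w : ℂ} {F : ℂ → E}

theorem integrableOn_exp_neg_mul_Ioi {d : ℝ} (hd : 0 < d) :
    IntegrableOn (fun t : ℝ => Real.exp (-(d * t))) (Ioi 0) := by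
  simpa only [neg_mul] using exp_neg_integrableOn_Ioi 0 hd

theorem norm_rayPrimitive_le {A d : ℝ} (hd : 0 < d)
    (hF : ∀ t : ℝ, 0 ≤ t → ‖F (w + t * ω)‖ ≤ A * Real.exp (-(d * t))) :
    ‖rayPrimitive ω F w‖ ≤ ‖ω‖ / d * A := by
  have hexp : ∫ t in Ioi (0 : ℝ), Real.exp (-(d * t)) = 1 / d := by
    simpa [neg_mul] using integral_exp_mul_Ioi (neg_lt_zero.mpr hd) 0
  have hint : ‖∫ t in Ioi (0 : ℝ), F (w + t * ω)‖ ≤ A * (1 / d) := by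
    rw [← hexp, ← integral_const_mul]
    refine norm_integral_le_of_norm_le ((integrableOn_exp_neg_mul_Ioi hd).const_mul A) ?_
    filter_upwards [ae_restrict_mem measurableSet_Ioi] with t ht using hF t (le_of_lt ht)
  calc ‖rayPrimitive ω F w‖ = ‖ω‖ * ‖∫ t in Ioi (0 : ℝ), F (w + t * ω)‖ := by
        rw [rayPrimitive, norm_neg, norm_smul]
    _ ≤ ‖ω‖ * (A * (1 / d)) := by gcongr
    _ = ‖ω‖ / d * A := by ring

theorem hasDerivAt_comp_ray {t : ℝ} (hF : DifferentiableAt ℂ F (w + t * ω)) :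
    HasDerivAt (fun t : ℝ => F (w + t * ω)) (ω • deriv F (w + t * ω)) t := by
  have hray : HasDerivAt (fun t : ℝ => w + (t : ℂ) * ω) ω t := by
    simpa using (Complex.ofRealCLM.hasDerivAt (x := t)).mul_const ω |>.const_add w
  exact hF.hasDerivAt.scomp t hray

variable [CompleteSpace E]

theorem integral_smul_deriv_comp_ray
    (hF : ∀ t : ℝ, 0 ≤ t → DifferentiableAt ℂ F (w + t * ω))
    (hint : IntegrableOn (fun t : ℝ => F (w + t * ω)) (Ioi 0))
    (hint' : IntegrableOn (fun t : ℝ => deriv F (w + t * ω)) (Ioi 0)) :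
    ω • ∫ t in Ioi (0 : ℝ), deriv F (w + t * ω) = -F w := by
  have hderiv := fun t (ht : t ∈ Ici (0 : ℝ)) => hasDerivAt_comp_ray (hF t ht)
  have hzero := tendsto_zero_of_hasDerivAt_of_integrableOn_Ioi
    (fun t ht => hderiv t (Ioi_subset_Ici_self ht)) (hint'.smul ω) hint
  rw [← integral_smul]
  simpa using integral_Ioi_of_hasDerivAt_of_tendsto' hderiv (hint'.smul ω) hzero

theorem hasDerivAt_rayPrimitive {Ω s : Set ℂ} {g : ℝ → ℝ} (hΩ : IsOpen Ω)
    (hray : ∀ w ∈ Ω, ∀ t : ℝ, 0 ≤ t → w + t * ω ∈ Ω) (hF : DifferentiableOn ℂ F Ω) (hw : w ∈ Ω)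
    (hs : s ∈ 𝓝 w) (hg : IntegrableOn g (Ioi 0))
    (hbound : ∀ u ∈ s, ∀ t : ℝ, 0 ≤ t → ‖F (u + t * ω)‖ ≤ g t) :
    HasDerivAt (rayPrimitive ω F) (F w) w := by
  have hdiff : ∀ u ∈ Ω, ∀ t : ℝ, 0 ≤ t → DifferentiableAt ℂ F (u + t * ω) := fun u hu t ht =>
    hF.differentiableAt (hΩ.mem_nhds (hray u hu t ht))
  have hmeas : ∀ u ∈ s ∩ Ω,
      AEStronglyMeasurable (fun t : ℝ => F (u + t * ω)) (volume.restrict (Ioi 0)) := fun u hu =>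
    ContinuousOn.aestronglyMeasurable (fun t ht => (hasDerivAt_comp_ray
      (hdiff u hu.2 t (le_of_lt ht))).continuousAt.continuousWithinAt) measurableSet_Ioi
  have hsΩ : s ∩ Ω ∈ 𝓝 w := inter_mem hs (hΩ.mem_nhds hw)
  have hae : ∀ᵐ t : ℝ ∂volume.restrict (Ioi 0), 0 ≤ t := by
    filter_upwards [ae_restrict_mem measurableSet_Ioi] with t ht using le_of_lt ht
  obtain ⟨hint', hparam⟩ := hasDerivAt_integral_of_dominated_of_differentiableOn
    (F := fun (u : ℂ) (t : ℝ) => F (u + t * ω)) hsΩ hmeas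
    (hae.mono fun t ht u hu =>
      (differentiableAt_comp_add_const.mpr (hdiff u hu.2 t ht)).differentiableWithinAt)
    hg (hae.mono fun t ht u hu => hbound u hu.1 t ht)
  simp only [deriv_comp_add_const] at hint' hparam
  have hint : IntegrableOn (fun t : ℝ => F (w + t * ω)) (Ioi 0) :=
    hg.mono' (hmeas w (mem_of_mem_nhds hsΩ))
      (hae.mono fun t ht => hbound w (mem_of_mem_nhds hs) t ht)
  refine ((hparam.const_smul ω).neg).congr_deriv ?_
  rw [integral_smul_deriv_comp_ray (hdiff w hw) hint hint', neg_neg]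

end RayPrimitive

section GaussianPrimitive

/-- A direction, of length `√2 |a|`, along which `exp (i a w ^ 2)` decays when starting from the
positive real axis. The scaling makes it polynomial in `|a|` and `a`, so that both signs of `a` are
treated at once. -/
def decayDirection (a : ℝ) : ℂ := |a| + a * Complex.I

/-- The exponent of the Gaussian regularization of `exp (i a w ^ 2)` centred at `y₀`. -/
def gaussianPhase (a ε y₀ : ℝ) (w : ℂ) : ℂ := -(ε : ℂ) * (w - y₀) ^ 2 + Complex.I * a * w ^ 2

/-- The height of `w` over the boundary of the sector `|Im w| < Re w`: it equals `w` on the real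
axis, and it controls the rate of decay of `exp (gaussianPhase a ε y₀ w)` along
`decayDirection a`. -/
def sectorHeight (w : ℂ) : ℝ := w.re - |w.im|

/-- The part of the sector `|Im w| < Re w` where the oscillation `exp (i a w ^ 2)` dominates the
possible growth of the regularizing Gaussian along `decayDirection a`. -/
def decayRegion (a ε y₀ : ℝ) : Set ℂ := {w | 2 * ε * |y₀| < |a| * sectorHeight w}

/-- The `j`-th iterated primitive of the regularized exponential, each primitive being taken from
infinity along `decayDirection a`. -/
def gaussianPrimitive (a ε y₀ : ℝ) (j : ℕ) : ℂ → ℂ :=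
  (rayPrimitive (decayDirection a))^[j] fun w => Complex.exp (gaussianPhase a ε y₀ w)

variable {a ε y₀ : ℝ} {w : ℂ} {t : ℝ}

theorem gaussianPrimitive_succ (j : ℕ) :
    gaussianPrimitive a ε y₀ (j + 1) =
      rayPrimitive (decayDirection a) (gaussianPrimitive a ε y₀ j) :=
  Function.iterate_succ_apply' _ _ _

theorem continuous_sectorHeight : Continuous sectorHeight := by
  unfold sectorHeight; fun_prop

theorem sectorHeight_ofReal (y : ℝ) : sectorHeight y = y := by simp [sectorHeight]

theorem sectorHeight_le_sectorHeight_add (ht : 0 ≤ t) :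
    sectorHeight w ≤ sectorHeight (w + t * decayDirection a) := by
  have him : |w.im + t * a| ≤ |w.im| + t * |a| := by
    simpa [abs_mul, abs_of_nonneg ht] using abs_add_le w.im (t * a)
  simp only [sectorHeight, decayDirection, Complex.add_re, Complex.add_im, Complex.re_ofReal_mul,
    Complex.im_ofReal_mul, Complex.ofReal_re, Complex.ofReal_im, Complex.I_re, Complex.I_im,
    mul_zero, mul_one, zero_add, add_zero]
  linarith

theorem isOpen_decayRegion : IsOpen (decayRegion a ε y₀) :=
  isOpen_lt continuous_const (continuous_const.mul continuous_sectorHeight)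

theorem add_decayDirection_mem_decayRegion (hw : w ∈ decayRegion a ε y₀) (ht : 0 ≤ t) :
    w + t * decayDirection a ∈ decayRegion a ε y₀ :=
  hw.trans_le (mul_le_mul_of_nonneg_left (sectorHeight_le_sectorHeight_add ht) (abs_nonneg a))

theorem abs_mul_sectorHeight_pos (hε : 0 ≤ ε) (hw : w ∈ decayRegion a ε y₀) :
    0 < |a| * sectorHeight w :=
  lt_of_le_of_lt (by positivity) hw

theorem ne_zero_of_mem_decayRegion (hε : 0 ≤ ε) (hw : w ∈ decayRegion a ε y₀) : a ≠ 0 :=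
  abs_ne_zero.mp (left_ne_zero_of_mul (abs_mul_sectorHeight_pos hε hw).ne')

theorem sectorHeight_pos (hε : 0 ≤ ε) (hw : w ∈ decayRegion a ε y₀) : 0 < sectorHeight w :=
  (mul_pos_iff_of_pos_left (abs_pos.mpr (ne_zero_of_mem_decayRegion hε hw))).mp
    (abs_mul_sectorHeight_pos hε hw)

theorem re_gaussianPhase_ofReal (y : ℝ) :
    (gaussianPhase a ε y₀ y).re = -(ε * (y - y₀) ^ 2) := by
  simp [gaussianPhase, pow_two]

theorem re_gaussianPhase_add_le (hε : 0 ≤ ε) (hw : w ∈ decayRegion a ε y₀) (ht : 0 ≤ t) :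
    (gaussianPhase a ε y₀ (w + t * decayDirection a)).re ≤
      (gaussianPhase a ε y₀ w).re - a ^ 2 * sectorHeight w * t := by
  have hre : (gaussianPhase a ε y₀ (w + t * decayDirection a)).re =
      (gaussianPhase a ε y₀ w).re - 2 * |a| * a ^ 2 * t ^ 2 +
        2 * (ε * (a * w.im) - ε * |a| * (w.re - y₀) - |a| * (a * w.im) - a ^ 2 * w.re) * t := by
    simp only [gaussianPhase, decayDirection, pow_two, Complex.add_re, Complex.mul_re,
      Complex.neg_re, Complex.ofReal_re, Complex.neg_im, Complex.ofReal_im, Complex.sub_re,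
      Complex.add_im, Complex.mul_im, Complex.sub_im, Complex.I_re, Complex.I_im]
    ring_nf
    rw [sq_abs]
    ring
  have hslope : 2 * (ε * (a * w.im) - ε * |a| * (w.re - y₀) - |a| * (a * w.im) - a ^ 2 * w.re) ≤
      -(a ^ 2 * sectorHeight w) := by
    have him : |a * w.im| ≤ |a| * |w.im| := (abs_mul a w.im).le
    have h₁ : ε * (a * w.im) ≤ ε * (|a| * |w.im|) :=
      mul_le_mul_of_nonneg_left ((le_abs_self _).trans him) hε
    have h₂ : -(|a| * (a * w.im)) ≤ |a| * (|a| * |w.im|) := by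
      rw [← mul_neg]
      exact mul_le_mul_of_nonneg_left ((neg_le_abs _).trans him) (abs_nonneg a)
    have h₃ : ε * |a| * y₀ ≤ ε * |a| * |y₀| := by gcongr; exact le_abs_self y₀
    have h₄ : |a| * (2 * ε * |y₀|) ≤ |a| * (|a| * sectorHeight w) :=
      mul_le_mul_of_nonneg_left (le_of_lt hw) (abs_nonneg a)
    have h₅ : 0 ≤ ε * (|a| * sectorHeight w) :=
      mul_nonneg hε (abs_mul_sectorHeight_pos hε hw).le
    have hsq : |a| * |a| = a ^ 2 := by rw [← pow_two, sq_abs]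
    simp only [sectorHeight] at h₄ h₅ ⊢
    linear_combination 2 * h₁ + 2 * h₂ + 2 * h₃ + h₄ + 2 * h₅ + (w.re + |w.im|) * hsq
  have hquad : 0 ≤ 2 * |a| * a ^ 2 * t ^ 2 := by positivity
  linear_combination hre + t * hslope + hquad

theorem norm_gaussianPrimitive_ray_le (hε : 0 ≤ ε) (j : ℕ) (hw : w ∈ decayRegion a ε y₀)
    (ht : 0 ≤ t) :
    ‖gaussianPrimitive a ε y₀ j (w + t * decayDirection a)‖ ≤
      (‖decayDirection a‖ / (a ^ 2 * sectorHeight w)) ^ j *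
        Real.exp (gaussianPhase a ε y₀ w).re * Real.exp (-(a ^ 2 * sectorHeight w * t)) := by
  induction j generalizing w t with
  | zero =>
    rw [pow_zero, one_mul, ← Real.exp_add, ← sub_eq_add_neg]
    exact (Complex.norm_exp _).trans_le (Real.exp_le_exp.mpr (re_gaussianPhase_add_le hε hw ht))
  | succ j ih =>
    have ha := ne_zero_of_mem_decayRegion hε hw
    have hpos := sectorHeight_pos hε hw
    have hle := sectorHeight_le_sectorHeight_add (a := a) (w := w) ht
    have hwt := add_decayDirection_mem_decayRegion hw ht
    set u := w + t * decayDirection a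
    have hposu : 0 < sectorHeight u := hpos.trans_le hle
    rw [gaussianPrimitive_succ]
    calc ‖rayPrimitive (decayDirection a) (gaussianPrimitive a ε y₀ j) u‖
        ≤ ‖decayDirection a‖ / (a ^ 2 * sectorHeight u) *
          ((‖decayDirection a‖ / (a ^ 2 * sectorHeight u)) ^ j *
            Real.exp (gaussianPhase a ε y₀ u).re) :=
          norm_rayPrimitive_le (by positivity) fun τ hτ => ih hwt hτ
      _ = (‖decayDirection a‖ / (a ^ 2 * sectorHeight u)) ^ (j + 1) *
            Real.exp (gaussianPhase a ε y₀ u).re := by ring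
      _ ≤ (‖decayDirection a‖ / (a ^ 2 * sectorHeight w)) ^ (j + 1) *
            Real.exp ((gaussianPhase a ε y₀ w).re - a ^ 2 * sectorHeight w * t) := by
          gcongr
          exact re_gaussianPhase_add_le hε hw ht
      _ = _ := by rw [sub_eq_add_neg, Real.exp_add]; ring

theorem norm_gaussianPrimitive_le (hε : 0 ≤ ε) (j : ℕ) (hw : w ∈ decayRegion a ε y₀) :
    ‖gaussianPrimitive a ε y₀ j w‖ ≤ (‖decayDirection a‖ / (a ^ 2 * sectorHeight w)) ^ j *
      Real.exp (gaussianPhase a ε y₀ w).re := by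
  simpa using norm_gaussianPrimitive_ray_le hε j hw le_rfl

theorem continuous_gaussianPhase : Continuous fun p : ℝ × ℂ => gaussianPhase a p.1 y₀ p.2 := by
  unfold gaussianPhase; fun_prop

theorem exists_integrableOn_bound_gaussianPrimitive_ray (hε : 0 ≤ ε) (j : ℕ)
    (hw : w ∈ decayRegion a ε y₀) :
    ∃ s ∈ 𝓝 w, ∃ g : ℝ → ℝ, IntegrableOn g (Ioi 0) ∧ ∀ u ∈ s, ∀ t : ℝ, 0 ≤ t →
      ‖gaussianPrimitive a ε y₀ j (u + t * decayDirection a)‖ ≤ g t := by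
  have ha := ne_zero_of_mem_decayRegion hε hw
  have hpos := sectorHeight_pos hε hw
  obtain ⟨d, hd₀, hdw⟩ := exists_between hpos
  obtain ⟨B, hB⟩ := exists_gt (gaussianPhase a ε y₀ w).re
  have hphase : ContinuousAt (fun u => (gaussianPhase a ε y₀ u).re) w :=
    (Complex.continuous_re.comp
      (continuous_gaussianPhase.comp (Continuous.prodMk_right ε))).continuousAt
  refine ⟨_, (isOpen_decayRegion.eventually_mem hw).and
    ((continuous_sectorHeight.continuousAt.eventually_const_lt hdw).and
      (hphase.eventually_lt_const hB)),
    _, (integrableOn_exp_neg_mul_Ioi (d := a ^ 2 * d) (by positivity)).const_mul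
      ((‖decayDirection a‖ / (a ^ 2 * d)) ^ j * Real.exp B), ?_⟩
  rintro u ⟨hu, hdu, huB⟩ t ht
  have hposu := sectorHeight_pos hε hu
  refine (norm_gaussianPrimitive_ray_le hε j hu ht).trans ?_
  gcongr

theorem differentiableOn_gaussianPrimitive (hε : 0 ≤ ε) (j : ℕ) :
    DifferentiableOn ℂ (gaussianPrimitive a ε y₀ j) (decayRegion a ε y₀) := by
  induction j with
  | zero =>
    have : Differentiable ℂ (gaussianPrimitive a ε y₀ 0) := by
      unfold gaussianPrimitive gaussianPhase
      simp only [Function.iterate_zero, id_eq]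
      fun_prop
    exact this.differentiableOn
  | succ j ih =>
    intro w hw
    obtain ⟨s, hs, g, hg, hbound⟩ := exists_integrableOn_bound_gaussianPrimitive_ray hε j hw
    rw [gaussianPrimitive_succ]
    exact (hasDerivAt_rayPrimitive isOpen_decayRegion
      (fun _ hw _ ht => add_decayDirection_mem_decayRegion hw ht) ih hw hs hg
      hbound).differentiableAt.differentiableWithinAt

theorem hasDerivAt_gaussianPrimitive_succ (hε : 0 ≤ ε) (j : ℕ) (hw : w ∈ decayRegion a ε y₀) :
    HasDerivAt (gaussianPrimitive a ε y₀ (j + 1)) (gaussianPrimitive a ε y₀ j w) w := by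
  obtain ⟨s, hs, g, hg, hbound⟩ := exists_integrableOn_bound_gaussianPrimitive_ray hε j hw
  rw [gaussianPrimitive_succ]
  exact hasDerivAt_rayPrimitive isOpen_decayRegion
    (fun _ hw _ ht => add_decayDirection_mem_decayRegion hw ht)
    (differentiableOn_gaussianPrimitive hε j) hw hs hg hbound

theorem eventually_mem_decayRegion (ha : a ≠ 0) (hw : 0 < sectorHeight w) (y₀ : ℝ) :
    ∀ᶠ ε in 𝓝[>] (0 : ℝ), w ∈ decayRegion a ε y₀ := by
  have hlim : Tendsto (fun ε : ℝ => 2 * ε * |y₀|) (𝓝[>] 0) (𝓝 0) := by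
    refine Tendsto.mono_left ?_ nhdsWithin_le_nhds
    exact Continuous.tendsto' (by fun_prop) _ _ (by simp)
  exact hlim.eventually_lt_const (mul_pos (abs_pos.mpr ha) hw)

theorem tendsto_gaussianPhase (a y₀ : ℝ) (w : ℂ) :
    Tendsto (fun ε => gaussianPhase a ε y₀ w) (𝓝[>] 0) (𝓝 (gaussianPhase a 0 y₀ w)) :=
  ((continuous_gaussianPhase.comp (Continuous.prodMk_left w)).tendsto 0).mono_left
    nhdsWithin_le_nhds

theorem continuousOn_gaussianPrimitive_ray (hε : 0 ≤ ε) (j : ℕ) (hw : w ∈ decayRegion a ε y₀) :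
    ContinuousOn (fun t : ℝ => gaussianPrimitive a ε y₀ j (w + t * decayDirection a)) (Ioi 0) :=
  fun _ ht => (hasDerivAt_comp_ray ((differentiableOn_gaussianPrimitive hε j).differentiableAt
    (isOpen_decayRegion.mem_nhds (add_decayDirection_mem_decayRegion hw
      (le_of_lt ht))))).continuousAt.continuousWithinAt

theorem tendsto_gaussianPrimitive (ha : a ≠ 0) (j : ℕ) (hw : 0 < sectorHeight w) :
    Tendsto (fun ε => gaussianPrimitive a ε y₀ j w) (𝓝[>] 0)
      (𝓝 (gaussianPrimitive a 0 y₀ j w)) := by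
  induction j generalizing w with
  | zero => exact (tendsto_gaussianPhase a y₀ w).cexp
  | succ j ih =>
    simp only [gaussianPrimitive_succ]
    obtain ⟨B, hB⟩ := exists_gt (gaussianPhase a 0 y₀ w).re
    refine (Tendsto.const_smul (tendsto_integral_filter_of_dominated_convergence
      (fun t => (‖decayDirection a‖ / (a ^ 2 * sectorHeight w)) ^ j * Real.exp B *
        Real.exp (-(a ^ 2 * sectorHeight w * t))) ?_ ?_ ?_ ?_) _).neg
    · filter_upwards [self_mem_nhdsWithin, eventually_mem_decayRegion ha hw y₀] with ε hε hmem
        using (continuousOn_gaussianPrimitive_ray (le_of_lt hε) j hmem).aestronglyMeasurable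
          measurableSet_Ioi
    · filter_upwards [self_mem_nhdsWithin, eventually_mem_decayRegion ha hw y₀,
        ((Complex.continuous_re.tendsto _).comp
          (tendsto_gaussianPhase a y₀ w)).eventually_lt_const hB] with ε hε hmem hεB
      filter_upwards [ae_restrict_mem measurableSet_Ioi] with t ht
      refine (norm_gaussianPrimitive_ray_le (le_of_lt hε) j hmem (le_of_lt ht)).trans ?_
      gcongr
      exact hεB.le
    · exact (integrableOn_exp_neg_mul_Ioi (by positivity)).const_mul _
    · filter_upwards [ae_restrict_mem measurableSet_Ioi] with t ht
      exact ih (hw.trans_le (sectorHeight_le_sectorHeight_add (le_of_lt ht)))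

end GaussianPrimitive

section CnAlpha

variable {b α C D p y : ℝ} {n k m : ℕ} {f g : ℝ → ℂ}

theorem hasDerivWithinAt_iteratedDerivWithin_Ici (hf : ContDiffOn ℝ n f (Ici b)) (hk : k < n)
    (hy : y ∈ Ici b) :
    HasDerivWithinAt (iteratedDerivWithin k f (Ici b)) (iteratedDerivWithin (k + 1) f (Ici b) y)
      (Ici b) y := by
  rw [iteratedDerivWithin_succ]
  exact (hf.differentiableOn_iteratedDerivWithin (by exact_mod_cast hk)
    (uniqueDiffOn_Ici b) y hy).hasDerivWithinAt

theorem continuousOn_iteratedDerivWithin_Ici (hf : ContDiffOn ℝ n f (Ici b)) (hk : k ≤ n) :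
    ContinuousOn (iteratedDerivWithin k f (Ici b)) (Ici b) :=
  hf.continuousOn_iteratedDerivWithin (by exact_mod_cast hk) (uniqueDiffOn_Ici b)

theorem sum_norm_iteratedDerivWithin_le_cnAlphaNorm (hb : 0 < b) :
    ∑ k ∈ Finset.range n, ‖iteratedDerivWithin k f (Ici b) b‖ / b ^ ((n : ℝ) - k + α) ≤
      CnAlphaNorm b n α f :=
  le_add_of_nonneg_right <| Real.iSup_nonneg fun y =>
    div_nonneg (norm_nonneg _) (Real.rpow_nonneg (hb.le.trans y.2) _)

theorem norm_iteratedDerivWithin_left_le (hb : 0 < b) (hk : k < n) :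
    ‖iteratedDerivWithin k f (Ici b) b‖ ≤ CnAlphaNorm b n α f * b ^ ((n : ℝ) - k + α) := by
  rw [← div_le_iff₀ (by positivity)]
  exact (Finset.single_le_sum (f := fun k : ℕ =>
    ‖iteratedDerivWithin k f (Ici b) b‖ / b ^ ((n : ℝ) - k + α)) (fun _ _ => by positivity)
    (Finset.mem_range.mpr hk)).trans (sum_norm_iteratedDerivWithin_le_cnAlphaNorm hb)

theorem MemCnAlpha.norm_iteratedDerivWithin_le (hf : MemCnAlpha b n α f) (hb : 0 < b)
    (hy : y ∈ Ici b) :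
    ‖iteratedDerivWithin n f (Ici b) y‖ ≤ CnAlphaNorm b n α f * y ^ α := by
  have hpos : ∀ x ∈ Ici b, 0 < x ^ α := fun x hx => Real.rpow_pos_of_pos (hb.trans_le hx) α
  obtain ⟨-, M, -, hM⟩ := hf
  have hbdd : BddAbove (range fun x : Ici b =>
      ‖iteratedDerivWithin n f (Ici b) x‖ / (x : ℝ) ^ α) :=
    ⟨M, forall_mem_range.mpr fun x => (div_le_iff₀ (hpos x x.2)).mpr (hM x x.2)⟩
  rw [← div_le_iff₀ (hpos y hy)]
  exact (le_ciSup hbdd ⟨y, hy⟩).trans <|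
    le_add_of_nonneg_left <| Finset.sum_nonneg fun _ _ => by positivity

theorem norm_le_of_norm_hasDerivWithinAt_le_rpow {E : Type*} [NormedAddCommGroup E]
    [NormedSpace ℝ E] {u u' : ℝ → E} (hb : 0 < b) (hp : 0 ≤ p)
    (hu : ∀ x ∈ Ici b, HasDerivWithinAt u (u' x) (Ici b) x)
    (hu' : ∀ x ∈ Ici b, ‖u' x‖ ≤ C * x ^ p) (hub : ‖u b‖ ≤ D * b ^ (p + 1)) (hy : y ∈ Ici b) :
    ‖u y‖ ≤ (D + C) * y ^ (p + 1) := by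
  have hy₀ : 0 < y := hb.trans_le hy
  have hC : 0 ≤ C := nonneg_of_mul_nonneg_left ((norm_nonneg _).trans (hu' y hy)) (by positivity)
  have hD : 0 ≤ D := nonneg_of_mul_nonneg_left ((norm_nonneg _).trans hub) (by positivity)
  have hdiff : ‖u y - u b‖ ≤ C * y ^ p * ‖y - b‖ := by
    refine (convex_Icc b y).norm_image_sub_le_of_norm_hasDerivWithin_le
      (fun x hx => (hu x hx.1).mono Icc_subset_Ici_self) (fun x hx => (hu' x hx.1).trans ?_)
      (left_mem_Icc.mpr hy) (right_mem_Icc.mpr hy)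
    have hx₀ : 0 ≤ x := hb.le.trans hx.1
    gcongr
    exact hx.2
  have hyb : ‖y - b‖ ≤ y := by
    rw [Real.norm_of_nonneg (sub_nonneg.mpr hy)]
    exact sub_le_self y hb.le
  calc ‖u y‖ ≤ ‖u b‖ + ‖u y - u b‖ := norm_le_norm_add_norm_sub' _ _
    _ ≤ D * b ^ (p + 1) + C * y ^ p * ‖y - b‖ := add_le_add hub hdiff
    _ ≤ D * y ^ (p + 1) + C * y ^ p * y := by gcongr; exact hy
    _ = (D + C) * y ^ (p + 1) := by rw [Real.rpow_add_one hy₀.ne']; ring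

theorem MemCnAlpha.norm_iteratedDerivWithin_le_of_add_eq (hf : MemCnAlpha b n α f) (hb : 0 < b)
    (hα : 0 ≤ α) (hkm : k + m = n) (hy : y ∈ Ici b) :
    ‖iteratedDerivWithin k f (Ici b) y‖ ≤ (m + 1) * CnAlphaNorm b n α f * y ^ (m + α) := by
  induction m generalizing k y with
  | zero => simpa [← hkm] using hf.norm_iteratedDerivWithin_le hb hy
  | succ m ih =>
    have hk : k < n := by omega
    have hleft := norm_iteratedDerivWithin_left_le (α := α) (f := f) hb hk
    rw [show (n : ℝ) - k + α = m + α + 1 by rw [← hkm]; push_cast; ring] at hleft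
    have hgrowth := norm_le_of_norm_hasDerivWithinAt_le_rpow hb (by positivity)
      (fun x hx => hasDerivWithinAt_iteratedDerivWithin_Ici hf.1 hk hx)
      (fun x hx => ih (k := k + 1) (by omega) hx) hleft hy
    calc ‖iteratedDerivWithin k f (Ici b) y‖
        ≤ (CnAlphaNorm b n α f + (m + 1) * CnAlphaNorm b n α f) * y ^ (m + α + 1) := hgrowth
      _ = _ := by push_cast; ring_nf

theorem MemCnAlpha.norm_le (hf : MemCnAlpha b n α f) (hb : 0 < b) (hα : 0 ≤ α) (hy : y ∈ Ici b) :
    ‖f y‖ ≤ (n + 1) * CnAlphaNorm b n α f * y ^ (n + α) := by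
  simpa using hf.norm_iteratedDerivWithin_le_of_add_eq hb hα (zero_add n) hy

end CnAlpha

section PowerWeight

variable {E : Type*} [NormedAddCommGroup E] {b p : ℝ} {k l : ℝ → E}

theorem aestronglyMeasurable_norm_mul_rpow (hb : 0 < b) (hk : ContinuousOn k (Ici b)) :
    AEStronglyMeasurable (fun y => ‖k y‖ * y ^ p) (volume.restrict (Ioi b)) :=
  ((hk.mono Ioi_subset_Ici_self).norm.mul (continuousOn_id.rpow_const fun _ hy =>
    Or.inl (hb.trans hy).ne')).aestronglyMeasurable measurableSet_Ioi

theorem integrableOn_norm_mul_rpow_of_le {B : ℝ → ℝ} (hb : 0 < b) (hk : ContinuousOn k (Ici b))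
    (hB : IntegrableOn B (Ioi b)) (hle : ∀ y ∈ Ioi b, ‖k y‖ * y ^ p ≤ B y) :
    IntegrableOn (fun y => ‖k y‖ * y ^ p) (Ioi b) := by
  refine hB.mono' (aestronglyMeasurable_norm_mul_rpow hb hk) ?_
  filter_upwards [ae_restrict_mem measurableSet_Ioi] with y hy
  rw [Real.norm_of_nonneg (mul_nonneg (norm_nonneg _) (Real.rpow_nonneg (hb.trans hy).le _))]
  exact hle y hy

theorem integrableOn_norm_sub_mul_rpow (hb : 0 < b) (hk : ContinuousOn k (Ici b))
    (hl : ContinuousOn l (Ici b)) (hkp : IntegrableOn (fun y => ‖k y‖ * y ^ p) (Ioi b))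
    (hlp : IntegrableOn (fun y => ‖l y‖ * y ^ p) (Ioi b)) :
    IntegrableOn (fun y => ‖k y - l y‖ * y ^ p) (Ioi b) := by
  refine integrableOn_norm_mul_rpow_of_le hb (hk.sub hl) (hkp.add hlp) fun y hy => ?_
  rw [Pi.add_apply, ← add_mul]
  exact mul_le_mul_of_nonneg_right (norm_sub_le _ _) (Real.rpow_nonneg (hb.trans hy).le _)

theorem integrableOn_mul_of_norm_le_rpow {A : Type*} [NormedRing A] {C : ℝ} {k g : ℝ → A}
    (hk : ContinuousOn k (Ici b)) (hkp : IntegrableOn (fun y => ‖k y‖ * y ^ p) (Ioi b))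
    (hg : ContinuousOn g (Ici b)) (hgp : ∀ y ∈ Ici b, ‖g y‖ ≤ C * y ^ p) :
    IntegrableOn (fun y => k y * g y) (Ioi b) := by
  refine (hkp.const_mul C).mono'
    (((hk.mul hg).mono Ioi_subset_Ici_self).aestronglyMeasurable measurableSet_Ioi) ?_
  filter_upwards [ae_restrict_mem measurableSet_Ioi] with y hy
  calc ‖k y * g y‖ ≤ ‖k y‖ * ‖g y‖ := norm_mul_le _ _
    _ ≤ ‖k y‖ * (C * y ^ p) := by
        gcongr
        exact hgp y (mem_Ici_of_Ioi hy)
    _ = C * (‖k y‖ * y ^ p) := by ring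

end PowerWeight

section ByParts

theorem integral_Ioi_deriv_mul_of_integrableOn {A : Type*} [NormedRing A] [NormedAlgebra ℝ A]
    [CompleteSpace A] {b : ℝ} {u v u' v' : ℝ → A}
    (hu : ∀ y ∈ Ici b, HasDerivWithinAt u (u' y) (Ici b) y)
    (hv : ∀ y ∈ Ici b, HasDerivWithinAt v (v' y) (Ici b) y)
    (huv' : IntegrableOn (fun y => u y * v' y) (Ioi b))
    (hu'v : IntegrableOn (fun y => u' y * v y) (Ioi b))
    (huv : IntegrableOn (fun y => u y * v y) (Ioi b)) :
    ∫ y in Ioi b, u' y * v y = -(u b * v b) - ∫ y in Ioi b, u y * v' y := by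
  have hderiv : ∀ y ∈ Ioi b, HasDerivAt (fun y => u y * v y) (u' y * v y + u y * v' y) y :=
    fun y hy =>
      ((hu y (mem_Ici_of_Ioi hy)).mul (hv y (mem_Ici_of_Ioi hy))).hasDerivAt (Ici_mem_nhds hy)
  have hint : IntegrableOn (fun y => u' y * v y + u y * v' y) (Ioi b) := hu'v.add huv'
  have hcont : ContinuousWithinAt (fun y => u y * v y) (Ici b) b :=
    ((hu b self_mem_Ici).mul (hv b self_mem_Ici)).continuousWithinAt
  have hsum := integral_Ioi_of_hasDerivAt_of_tendsto hcont hderiv hint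
    (tendsto_zero_of_hasDerivAt_of_integrableOn_Ioi hderiv hint huv)
  rw [integral_add hu'v huv', zero_sub] at hsum
  exact eq_sub_of_add_eq hsum

/-- The result of `n` integrations by parts in `∫ y in Ioi b, K 0 y * g y`, when each `K (j + 1)` is
a primitive of `K j` and the boundary terms at infinity vanish. -/
def byPartsFunctional (b : ℝ) (n : ℕ) (K : ℕ → ℝ → ℂ) (g : ℝ → ℂ) : ℂ :=
  ∑ k ∈ Finset.range n, (-1) ^ (k + 1) * (K (k + 1) b * iteratedDerivWithin k g (Ici b) b) +
    (-1) ^ n * ∫ y in Ioi b, K n y * iteratedDerivWithin n g (Ici b) y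

/-- A bound for the norm of `byPartsFunctional b n K` as a functional on `C_α^n([b,∞))`. -/
def byPartsWeight (b : ℝ) (n : ℕ) (α : ℝ) (K : ℕ → ℝ → ℂ) : ℝ :=
  ∑ k ∈ Finset.range n, ‖K (k + 1) b‖ * b ^ ((n : ℝ) - k + α) +
    ∫ y in Ioi b, ‖K n y‖ * y ^ α

variable {b α : ℝ} {n : ℕ} {K L : ℕ → ℝ → ℂ} {g : ℝ → ℂ}

theorem integral_Ioi_mul_eq_byPartsFunctional (hg : ContDiffOn ℝ n g (Ici b))
    (hK : ∀ j < n, ∀ y ∈ Ici b, HasDerivWithinAt (K (j + 1)) (K j y) (Ici b) y)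
    (hint : ∀ j ≤ n, IntegrableOn (fun y => K j y * iteratedDerivWithin j g (Ici b) y) (Ioi b))
    (hint' : ∀ j < n,
      IntegrableOn (fun y => K (j + 1) y * iteratedDerivWithin j g (Ici b) y) (Ioi b)) :
    ∫ y in Ioi b, K 0 y * g y = byPartsFunctional b n K g := by
  suffices ∀ m ≤ n, ∫ y in Ioi b, K 0 y * g y = byPartsFunctional b m K g from this n le_rfl
  intro m hm
  induction m with
  | zero => simp [byPartsFunctional]
  | succ m ih =>
    rw [ih (Nat.le_of_succ_le hm), byPartsFunctional, byPartsFunctional, Finset.sum_range_succ,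
      integral_Ioi_deriv_mul_of_integrableOn (hK m hm)
        (fun y hy => hasDerivWithinAt_iteratedDerivWithin_Ici hg hm hy)
        (hint (m + 1) hm) (hint m (Nat.le_of_succ_le hm)) (hint' m hm)]
    ring

theorem byPartsFunctional_sub
    (hK : IntegrableOn (fun y => K n y * iteratedDerivWithin n g (Ici b) y) (Ioi b))
    (hL : IntegrableOn (fun y => L n y * iteratedDerivWithin n g (Ici b) y) (Ioi b)) :
    byPartsFunctional b n (K - L) g = byPartsFunctional b n K g - byPartsFunctional b n L g := by
  simp only [byPartsFunctional, Pi.sub_apply, sub_mul, mul_sub, Finset.sum_sub_distrib,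
    integral_sub hK hL]
  ring

theorem norm_byPartsFunctional_le (hb : 0 < b) (hg : MemCnAlpha b n α g)
    (hK : IntegrableOn (fun y => ‖K n y‖ * y ^ α) (Ioi b)) :
    ‖byPartsFunctional b n K g‖ ≤ CnAlphaNorm b n α g * byPartsWeight b n α K := by
  rw [byPartsFunctional, byPartsWeight, mul_add, Finset.mul_sum,
    ← integral_const_mul (CnAlphaNorm b n α g)]
  refine norm_add_le_of_le (norm_sum_le_of_le _ fun k hk => ?_) ?_
  · calc ‖(-1) ^ (k + 1) * (K (k + 1) b * iteratedDerivWithin k g (Ici b) b)‖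
        = ‖K (k + 1) b‖ * ‖iteratedDerivWithin k g (Ici b) b‖ := by simp
      _ ≤ ‖K (k + 1) b‖ * (CnAlphaNorm b n α g * b ^ ((n : ℝ) - k + α)) := by
          gcongr
          exact norm_iteratedDerivWithin_left_le hb (Finset.mem_range.mp hk)
      _ = CnAlphaNorm b n α g * (‖K (k + 1) b‖ * b ^ ((n : ℝ) - k + α)) := by ring
  · rw [norm_mul, norm_pow, norm_neg, norm_one, one_pow, one_mul]
    refine norm_integral_le_of_norm_le (hK.const_mul _) ?_
    filter_upwards [ae_restrict_mem measurableSet_Ioi] with y hy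
    calc ‖K n y * iteratedDerivWithin n g (Ici b) y‖
        ≤ ‖K n y‖ * (CnAlphaNorm b n α g * y ^ α) := by
          rw [norm_mul]
          gcongr
          exact hg.norm_iteratedDerivWithin_le hb (mem_Ici_of_Ioi hy)
      _ = CnAlphaNorm b n α g * (‖K n y‖ * y ^ α) := by ring

theorem byPartsWeight_nonneg (hb : 0 < b) : 0 ≤ byPartsWeight b n α K :=
  add_nonneg (Finset.sum_nonneg fun _ _ => by positivity) <|
    setIntegral_nonneg measurableSet_Ioi fun _ hy =>
      mul_nonneg (norm_nonneg _) (Real.rpow_nonneg (hb.trans hy).le _)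

theorem tendsto_byPartsWeight_nhds_zero {ι : Type*} {l : Filter ι} [l.IsCountablyGenerated]
    {K : ι → ℕ → ℝ → ℂ} {B : ℝ → ℝ} (hb : 0 < b)
    (hcont : ∀ᶠ i in l, ContinuousOn (K i n) (Ici b))
    (hbound : ∀ᶠ i in l, ∀ y ∈ Ici b, ‖K i n y‖ * y ^ α ≤ B y) (hB : IntegrableOn B (Ioi b))
    (hlim : ∀ j, ∀ y ∈ Ici b, Tendsto (fun i => K i j y) l (𝓝 0)) :
    Tendsto (fun i => byPartsWeight b n α (K i)) l (𝓝 0) := by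
  have hterm : ∀ j, ∀ y ∈ Ici b, ∀ q : ℝ, Tendsto (fun i => ‖K i j y‖ * q) l (𝓝 0) :=
    fun j y hy q => by simpa using (hlim j y hy).norm.mul_const q
  have hsum := tendsto_finsetSum (Finset.range n) fun k _ =>
    hterm (k + 1) b self_mem_Ici (b ^ ((n : ℝ) - k + α))
  have hintegral : Tendsto (fun i => ∫ y in Ioi b, ‖K i n y‖ * y ^ α) l (𝓝 0) := by
    rw [← integral_zero ℝ ℝ (μ := volume.restrict (Ioi b))]
    refine tendsto_integral_filter_of_dominated_convergence B ?_ ?_ hB ?_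
    · filter_upwards [hcont] with i hi using aestronglyMeasurable_norm_mul_rpow hb hi
    · filter_upwards [hbound] with i hi
      filter_upwards [ae_restrict_mem measurableSet_Ioi] with y hy
      rw [Real.norm_of_nonneg (mul_nonneg (norm_nonneg _) (Real.rpow_nonneg (hb.trans hy).le _))]
      exact hi y (mem_Ici_of_Ioi hy)
    · filter_upwards [ae_restrict_mem measurableSet_Ioi] with y hy
      exact hterm n y (mem_Ici_of_Ioi hy) (y ^ α)
  simpa [byPartsWeight] using hsum.add hintegral

end ByParts

section OscillatoryKernel

/-- The `j`-th iterated primitive of the regularized oscillation `exp (-ε (y - y₀) ^ 2 + i a y ^ 2)`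
as a function on the real line; it is the kernel left after `j` integrations by parts. -/
def oscKernel (a ε y₀ : ℝ) (j : ℕ) (y : ℝ) : ℂ := gaussianPrimitive a ε y₀ j y

variable {a b ε y₀ y α p : ℝ} {n : ℕ}

theorem oscKernel_zero_left (a y₀ : ℝ) : oscKernel a 0 y₀ = oscKernel a 0 0 := by
  unfold oscKernel gaussianPrimitive gaussianPhase
  simp

theorem ofReal_mem_decayRegion_of_le (hb : (b : ℂ) ∈ decayRegion a ε y₀) (hy : b ≤ y) :
    (y : ℂ) ∈ decayRegion a ε y₀ := by
  simp only [decayRegion, mem_ofPred_eq, sectorHeight_ofReal] at hb ⊢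
  exact hb.trans_le (mul_le_mul_of_nonneg_left hy (abs_nonneg a))

theorem pos_of_ofReal_mem_decayRegion (hε : 0 ≤ ε) (hb : (b : ℂ) ∈ decayRegion a ε y₀) : 0 < b := by
  simpa only [sectorHeight_ofReal] using sectorHeight_pos hε hb

theorem ofReal_mem_decayRegion_zero (ha : a ≠ 0) (hb : 0 < b) (y₀ : ℝ) :
    (b : ℂ) ∈ decayRegion a 0 y₀ := by
  simp [decayRegion, sectorHeight_ofReal, ha, hb]

theorem eventually_ofReal_mem_decayRegion (ha : a ≠ 0) (hb : 0 < b) (y₀ : ℝ) :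
    ∀ᶠ ε in 𝓝[>] (0 : ℝ), (b : ℂ) ∈ decayRegion a ε y₀ :=
  eventually_mem_decayRegion ha (by rwa [sectorHeight_ofReal]) y₀

theorem hasDerivAt_oscKernel_succ (hε : 0 ≤ ε) (j : ℕ) (hy : (y : ℂ) ∈ decayRegion a ε y₀) :
    HasDerivAt (oscKernel a ε y₀ (j + 1)) (oscKernel a ε y₀ j y) y :=
  (hasDerivAt_gaussianPrimitive_succ hε j hy).comp_ofReal

theorem continuousOn_oscKernel (hε : 0 ≤ ε) (j : ℕ) (hb : (b : ℂ) ∈ decayRegion a ε y₀) :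
    ContinuousOn (oscKernel a ε y₀ j) (Ici b) :=
  (differentiableOn_gaussianPrimitive hε j).continuousOn.comp Complex.continuous_ofReal.continuousOn
    fun _ hy => ofReal_mem_decayRegion_of_le hb hy

theorem norm_oscKernel_le (hε : 0 ≤ ε) (j : ℕ) (hy : (y : ℂ) ∈ decayRegion a ε y₀) :
    ‖oscKernel a ε y₀ j y‖ ≤
      (‖decayDirection a‖ / (a ^ 2 * y)) ^ j * Real.exp (-(ε * (y - y₀) ^ 2)) := by
  have := norm_gaussianPrimitive_le hε j hy
  rwa [sectorHeight_ofReal, re_gaussianPhase_ofReal] at this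

theorem norm_oscKernel_mul_rpow_le (hε : 0 ≤ ε) (j : ℕ) (hy : (y : ℂ) ∈ decayRegion a ε y₀) :
    ‖oscKernel a ε y₀ j y‖ * y ^ α ≤ (‖decayDirection a‖ / a ^ 2) ^ j * y ^ (α - j) := by
  have hy₀ := pos_of_ofReal_mem_decayRegion hε hy
  have hexp : Real.exp (-(ε * (y - y₀) ^ 2)) ≤ 1 :=
    Real.exp_le_one_iff.mpr (neg_nonpos.mpr (by positivity))
  calc ‖oscKernel a ε y₀ j y‖ * y ^ α
      ≤ (‖decayDirection a‖ / (a ^ 2 * y)) ^ j * 1 * y ^ α := by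
        gcongr
        exact (norm_oscKernel_le hε j hy).trans (by gcongr)
    _ = (‖decayDirection a‖ / a ^ 2) ^ j * y ^ (α - j) := by
        rw [Real.rpow_sub hy₀, Real.rpow_natCast, ← div_div, div_pow _ y]
        ring

theorem integrableOn_norm_oscKernel_mul_rpow (hε : 0 ≤ ε) (hn : α + 1 < n)
    (hb : (b : ℂ) ∈ decayRegion a ε y₀) :
    IntegrableOn (fun y => ‖oscKernel a ε y₀ n y‖ * y ^ α) (Ioi b) := by
  have hb₀ := pos_of_ofReal_mem_decayRegion hε hb
  exact integrableOn_norm_mul_rpow_of_le hb₀ (continuousOn_oscKernel hε n hb)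
    ((integrableOn_Ioi_rpow_of_lt (by linarith) hb₀).const_mul _) fun y hy =>
      norm_oscKernel_mul_rpow_le hε n (ofReal_mem_decayRegion_of_le hb (le_of_lt hy))

theorem exp_neg_mul_sub_sq_le (hε : 0 ≤ ε) (y₀ y : ℝ) :
    Real.exp (-(ε * (y - y₀) ^ 2)) ≤ Real.exp (ε * y₀ ^ 2) * Real.exp (-(ε / 2) * y ^ 2) := by
  rw [← Real.exp_add, Real.exp_le_exp]
  linear_combination mul_nonneg hε (sq_nonneg (y - 2 * y₀)) / 2

theorem integrableOn_norm_oscKernel_mul_rpow_of_pos (hε : 0 < ε) (j : ℕ) (hp : -1 < p)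
    (hb : (b : ℂ) ∈ decayRegion a ε y₀) :
    IntegrableOn (fun y => ‖oscKernel a ε y₀ j y‖ * y ^ p) (Ioi b) := by
  have hb₀ := pos_of_ofReal_mem_decayRegion hε.le hb
  have ha := ne_zero_of_mem_decayRegion hε.le hb
  set C := (‖decayDirection a‖ / (a ^ 2 * b)) ^ j * Real.exp (ε * y₀ ^ 2)
  refine integrableOn_norm_mul_rpow_of_le hb₀ (continuousOn_oscKernel hε.le j hb)
    ((integrable_rpow_mul_exp_neg_mul_sq (half_pos hε) hp).integrableOn.const_mul C) fun y hy => ?_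
  have hy₀ : 0 < y := hb₀.trans hy
  have hyb : b ≤ y := le_of_lt hy
  calc ‖oscKernel a ε y₀ j y‖ * y ^ p
      ≤ (‖decayDirection a‖ / (a ^ 2 * b)) ^ j *
          (Real.exp (ε * y₀ ^ 2) * Real.exp (-(ε / 2) * y ^ 2)) * y ^ p := by
        gcongr
        refine (norm_oscKernel_le hε.le j (ofReal_mem_decayRegion_of_le hb hyb)).trans ?_
        gcongr
        exact exp_neg_mul_sub_sq_le hε.le y₀ y
    _ = C * (y ^ p * Real.exp (-(ε / 2) * y ^ 2)) := by ring

theorem tendsto_byPartsWeight_oscKernel_sub (ha : a ≠ 0) (hb : 0 < b) (hn : α + 1 < n) (y₀ : ℝ) :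
    Tendsto (fun ε => byPartsWeight b n α (oscKernel a ε y₀ - oscKernel a 0 y₀)) (𝓝[>] 0)
      (𝓝 0) := by
  have hb₀ := ofReal_mem_decayRegion_zero ha hb y₀
  have hmem : ∀ᶠ ε in 𝓝[>] (0 : ℝ), 0 ≤ ε ∧ (b : ℂ) ∈ decayRegion a ε y₀ :=
    (eventually_mem_nhdsWithin.mono fun ε hε => le_of_lt hε).and
      (eventually_ofReal_mem_decayRegion ha hb y₀)
  set A := (‖decayDirection a‖ / a ^ 2) ^ n
  refine tendsto_byPartsWeight_nhds_zero (B := fun y => A * y ^ (α - n) + A * y ^ (α - n)) hb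
    ?_ ?_ ?_ ?_
  · filter_upwards [hmem] with ε ⟨hε, hbε⟩
      using (continuousOn_oscKernel hε n hbε).sub (continuousOn_oscKernel le_rfl n hb₀)
  · filter_upwards [hmem] with ε ⟨hε, hbε⟩ y hy
    have hy₀ : 0 ≤ y := hb.le.trans hy
    calc ‖oscKernel a ε y₀ n y - oscKernel a 0 y₀ n y‖ * y ^ α
        ≤ (‖oscKernel a ε y₀ n y‖ + ‖oscKernel a 0 y₀ n y‖) * y ^ α := by
          gcongr
          exact norm_sub_le _ _
      _ ≤ A * y ^ (α - n) + A * y ^ (α - n) := by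
          rw [add_mul]
          exact add_le_add
            (norm_oscKernel_mul_rpow_le hε n (ofReal_mem_decayRegion_of_le hbε hy))
            (norm_oscKernel_mul_rpow_le le_rfl n (ofReal_mem_decayRegion_of_le hb₀ hy))
  · have := (integrableOn_Ioi_rpow_of_lt (a := α - n) (by linarith) hb).const_mul A
    exact this.add this
  · intro j y hy
    have hheight : 0 < sectorHeight (y : ℂ) := by
      rw [sectorHeight_ofReal]
      exact hb.trans_le hy
    exact tendsto_sub_nhds_zero_iff.mpr (tendsto_gaussianPrimitive ha j hheight)

end OscillatoryKernel

section RegularizedIntegral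

/-- The regularized oscillatory integral whose limit as `ε → 0⁺` is studied. -/
def regularizedIntegral (a b ε y₀ : ℝ) (g : ℝ → ℂ) : ℂ :=
  ∫ y in Ioi b,
    Complex.exp (-(ε : ℂ) * (y - y₀) ^ 2) * Complex.exp (Complex.I * a * y ^ 2) * g y

variable {a b ε y₀ α : ℝ} {n : ℕ} {g : ℝ → ℂ} {U : Set ℂ} {f : ℂ → ℝ → ℂ}

theorem regularizedIntegral_eq_integral_oscKernel :
    regularizedIntegral a b ε y₀ g = ∫ y in Ioi b, oscKernel a ε y₀ 0 y * g y := by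
  simp only [regularizedIntegral, ← Complex.exp_add]
  rfl

theorem regularizedIntegral_eq_byPartsFunctional (hε : 0 < ε)
    (hb : (b : ℂ) ∈ decayRegion a ε y₀) (hα : 0 ≤ α) (hg : MemCnAlpha b n α g) :
    regularizedIntegral a b ε y₀ g = byPartsFunctional b n (oscKernel a ε y₀) g := by
  have hb₀ := pos_of_ofReal_mem_decayRegion hε.le hb
  have hint : ∀ j, ∀ k ≤ n, IntegrableOn
      (fun y => oscKernel a ε y₀ j y * iteratedDerivWithin k g (Ici b) y) (Ioi b) := by
    intro j k hk
    obtain ⟨m, hkm⟩ := Nat.exists_eq_add_of_le hk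
    exact integrableOn_mul_of_norm_le_rpow (continuousOn_oscKernel hε.le j hb)
      (integrableOn_norm_oscKernel_mul_rpow_of_pos hε j
        (neg_one_lt_zero.trans_le (by positivity)) hb)
      (continuousOn_iteratedDerivWithin_Ici hg.1 hk)
      fun y hy => hg.norm_iteratedDerivWithin_le_of_add_eq hb₀ hα hkm.symm hy
  rw [regularizedIntegral_eq_integral_oscKernel]
  exact integral_Ioi_mul_eq_byPartsFunctional hg.1
    (fun j _ y hy => (hasDerivAt_oscKernel_succ hε.le j
      (ofReal_mem_decayRegion_of_le hb hy)).hasDerivWithinAt)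
    (fun j hj => hint j j hj) fun j hj => hint (j + 1) j hj.le

theorem norm_regularizedIntegral_sub_le (hε : 0 < ε) (hb : (b : ℂ) ∈ decayRegion a ε y₀)
    (hα : 0 ≤ α) (hn : α + 1 < n) (hg : MemCnAlpha b n α g) :
    ‖regularizedIntegral a b ε y₀ g - byPartsFunctional b n (oscKernel a 0 y₀) g‖ ≤
      CnAlphaNorm b n α g * byPartsWeight b n α (oscKernel a ε y₀ - oscKernel a 0 y₀) := by
  have hb₀ := pos_of_ofReal_mem_decayRegion hε.le hb
  have hbzero := ofReal_mem_decayRegion_zero (ne_zero_of_mem_decayRegion hε.le hb) hb₀ y₀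
  have hcont := continuousOn_oscKernel hε.le n hb
  have hcontzero := continuousOn_oscKernel le_rfl n hbzero
  have hweight := integrableOn_norm_oscKernel_mul_rpow hε.le hn hb
  have hweightzero := integrableOn_norm_oscKernel_mul_rpow le_rfl hn hbzero
  have hderiv := continuousOn_iteratedDerivWithin_Ici hg.1 le_rfl
  have hgrowth : ∀ y ∈ Ici b,
      ‖iteratedDerivWithin n g (Ici b) y‖ ≤ CnAlphaNorm b n α g * y ^ α :=
    fun y hy => hg.norm_iteratedDerivWithin_le hb₀ hy
  rw [regularizedIntegral_eq_byPartsFunctional hε hb hα hg,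
    ← byPartsFunctional_sub (integrableOn_mul_of_norm_le_rpow hcont hweight hderiv hgrowth)
      (integrableOn_mul_of_norm_le_rpow hcontzero hweightzero hderiv hgrowth)]
  exact norm_byPartsFunctional_le hb₀ hg
    (integrableOn_norm_sub_mul_rpow hb₀ hcont hcontzero hweight hweightzero)

theorem tendstoLocallyUniformlyOn_regularizedIntegral (ha : a ≠ 0) (hb : 0 < b) (hα : 0 ≤ α)
    (hn : α + 1 < n) (hreg : ∀ z ∈ U, MemCnAlpha b n α (f z))
    (hbd : ∀ z ∈ U, ∃ M : ℝ, ∀ᶠ w in 𝓝[U] z, CnAlphaNorm b n α (f w) ≤ M) (y₀ : ℝ) :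
    TendstoLocallyUniformlyOn (fun ε z => regularizedIntegral a b ε y₀ (f z))
      (fun z => byPartsFunctional b n (oscKernel a 0 0) (f z)) (𝓝[>] 0) U := by
  refine tendstoLocallyUniformlyOn_of_norm_sub_le ?_ hbd (fun ε => byPartsWeight_nonneg hb)
    (tendsto_byPartsWeight_oscKernel_sub ha hb hn y₀)
  filter_upwards [self_mem_nhdsWithin, eventually_ofReal_mem_decayRegion ha hb y₀]
    with ε hε hbε z hz
  rw [← oscKernel_zero_left a y₀]
  exact norm_regularizedIntegral_sub_le hε hbε hα hn (hreg z hz)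

theorem differentiableOn_regularizedIntegral (hε : 0 < ε) (hb : (b : ℂ) ∈ decayRegion a ε y₀)
    (hα : 0 ≤ α) (hU : IsOpen U) (hhol : ∀ y ∈ Ici b, DifferentiableOn ℂ (fun z => f z y) U)
    (hreg : ∀ z ∈ U, MemCnAlpha b n α (f z))
    (hbd : ∀ z ∈ U, ∃ M : ℝ, ∀ᶠ w in 𝓝[U] z, CnAlphaNorm b n α (f w) ≤ M) :
    DifferentiableOn ℂ (fun z => regularizedIntegral a b ε y₀ (f z)) U := by
  intro z hz
  have hb₀ := pos_of_ofReal_mem_decayRegion hε.le hb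
  obtain ⟨M, hM⟩ := hbd z hz
  have hs : {w | w ∈ U ∧ CnAlphaNorm b n α (f w) ≤ M} ∈ 𝓝 z := by
    rw [hU.nhdsWithin_eq hz] at hM
    exact (hU.eventually_mem hz).and hM
  simp only [regularizedIntegral_eq_integral_oscKernel]
  refine (hasDerivAt_integral_of_dominated_of_differentiableOn
    (F := fun w y => oscKernel a ε y₀ 0 y * f w y)
    (g := fun y => (n + 1) * M * (‖oscKernel a ε y₀ 0 y‖ * y ^ (n + α))) hs ?_ ?_ ?_
    ?_).2.differentiableAt.differentiableWithinAt
  · rintro w ⟨hw, -⟩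
    exact (((continuousOn_oscKernel hε.le 0 hb).mul (hreg w hw).1.continuousOn).mono
      Ioi_subset_Ici_self).aestronglyMeasurable measurableSet_Ioi
  · filter_upwards [ae_restrict_mem measurableSet_Ioi] with y hy
    exact ((hhol y (mem_Ici_of_Ioi hy)).mono fun w hw => hw.1).const_mul _
  · exact (integrableOn_norm_oscKernel_mul_rpow_of_pos hε 0
      (neg_one_lt_zero.trans_le (by positivity)) hb).const_mul _
  · filter_upwards [ae_restrict_mem measurableSet_Ioi] with y hy w ⟨hw, hwM⟩
    have hy₀ : 0 < y := hb₀.trans hy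
    calc ‖oscKernel a ε y₀ 0 y * f w y‖
        ≤ ‖oscKernel a ε y₀ 0 y‖ * ((n + 1) * M * y ^ (n + α)) := by
          rw [norm_mul]
          gcongr
          refine ((hreg w hw).norm_le hb₀ hα (mem_Ici_of_Ioi hy)).trans ?_
          gcongr
      _ = (n + 1) * M * (‖oscKernel a ε y₀ 0 y‖ * y ^ (n + α)) := by ring

end RegularizedIntegral

/-- holomorphic dependence of the oscillatory integral on a complex parameter. -/
theorem stmt16 (U : Set ℂ) (hU : IsOpen U) (a : ℝ) (ha : a ≠ 0) (b : ℝ) (hb : 0 < b)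
    (f : ℂ → ℝ → ℂ)
    (hhol : ∀ y ∈ Set.Ici b, DifferentiableOn ℂ (fun z => f z y) U)
    (n : ℕ) (α : ℝ) (hα : 0 ≤ α) (hn : α + 1 < n)
    (hreg : ∀ z ∈ U, MemCnAlpha b n α (f z))
    (hbd : ∀ z ∈ U, ∃ M : ℝ, ∀ᶠ w in 𝓝[U] z, CnAlphaNorm b n α (f w) ≤ M) :
    ∃ ψ : ℂ → ℂ,
      (∀ z ∈ U, ∀ y₀ : ℝ,
        Filter.Tendsto (fun ε : ℝ => ∫ y in Set.Ioi b,
            Complex.exp (-(ε : ℂ) * (y - y₀) ^ 2) * Complex.exp (Complex.I * a * y ^ 2) * f z y)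
          (𝓝[>] 0) (𝓝 (ψ z))) ∧
      DifferentiableOn ℂ ψ U := by
  have hlim := tendstoLocallyUniformlyOn_regularizedIntegral ha hb hα hn hreg hbd
  refine ⟨fun z => byPartsFunctional b n (oscKernel a 0 0) (f z),
    fun z hz y₀ => (hlim y₀).tendsto_at hz, (hlim 0).differentiableOn ?_ hU⟩
  filter_upwards [self_mem_nhdsWithin, eventually_ofReal_mem_decayRegion ha hb 0] with ε hε hbε
    using differentiableOn_regularizedIntegral hε hbε hα hU hhol hreg hbd
end
end

section
/- Let T∈(0,∞], let V:(0,T)×ℝ→ℂ be measurable, and let G:(0,T)×ℝ×ℝ→ℂ satisfy conditions (i)–(iii) of the Green's function assumption (as in the preceding context) with parameters α≥0 and n∈ℕ, n>α+3. Let 0≤β<n−α−3 and let F and a sequence (F_m) in C^n(ℝ,r^β) satisfy lim_{m→∞} ‖F−F_m‖_{C^n(ℝ,r^β)} = 0. Denote by Ψ(t,x;F) := lim_{ε→0⁺} ∫_ℝ e^{−εy²} G(t,x,y) F(y) dy the corresponding solutions. Then lim_{m→∞} Ψ(t,x;F_m) = Ψ(t,x;F), and the convergence is locally uniform on (0,T)×ℝ.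 -/
open Set Filter MeasureTheory Topology ENNReal

noncomputable section

/-- Membership in the space `C^n(ℝ, r^α)` with `r(y) = 1 + |y|`: `f` is `n`-times continuously
differentiable on `ℝ` and all derivatives up to order `n` satisfy a bound `M·(1+|y|)^α`. -/
def MemCnR (n : ℕ) (α : ℝ) (f : ℝ → ℂ) : Prop :=
  ContDiff ℝ n f ∧
    ∃ M : ℝ, 0 ≤ M ∧ ∀ k ≤ n, ∀ y : ℝ, ‖iteratedDeriv k f y‖ ≤ M * (1 + |y|) ^ α

/-- The norm on the space `C^n(ℝ, r^α)`. -/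
def CnRNorm (n : ℕ) (α : ℝ) (f : ℝ → ℂ) : ℝ :=
  ⨆ k : Fin (n + 1), ⨆ y : ℝ, ‖iteratedDeriv (k : ℕ) f y‖ / (1 + |y|) ^ α

/-- Absolute continuity of `g` on a set `I ⊆ ℝ`: `g` is an indefinite integral of a locally
integrable function `h` on `I`. -/
def IsACOn {E : Type*} [NormedAddCommGroup E] [NormedSpace ℝ E] (I : Set ℝ) (g : ℝ → E) : Prop :=
  ∃ h : ℝ → E, MeasureTheory.LocallyIntegrableOn h I ∧
    ∀ s₁ ∈ I, ∀ s₂ ∈ I, s₁ < s₂ → g s₂ - g s₁ = ∫ s in s₁..s₂, h s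

/-- The space `AC_{1,2}(S × ℝ)`: `Ψ(·,x)` is absolutely continuous on the time set `S` for every
`x`, and `Ψ(t,·)`, `∂Ψ/∂x(t,·)` are absolutely continuous on `ℝ` for every `t ∈ S`. -/
def MemAC12 (S : Set ℝ) (Ψ : ℝ → ℝ → ℂ) : Prop :=
  (∀ x : ℝ, IsACOn S (fun t => Ψ t x)) ∧
    ∀ t ∈ S, IsACOn Set.univ (Ψ t) ∧ IsACOn Set.univ (deriv (Ψ t))

/-! The amplitude `A = G̃(t, x, ·) F` of the oscillatory integral `∫ e^{ia(y-x)²} A(y) dy` lies in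
`C^n(ℝ, r^γ)` with `γ = α + β`, which need not be integrable. With
`w(y) = (1 + 2ia(y-x)²)⁻¹`, the identity `w(y) d/dy [(y-x) e^{ia(y-x)²}] = e^{ia(y-x)²}` allows one
to integrate by parts, replacing `A` by `L A = (x-y) (w A)'`. Since `w ∈ C^n(ℝ, r^{-2})`, each step
lowers the growth exponent by one, so `L^n A` is integrable as soon as `γ < n - 1`, and
`∫ e^{ia(y-x)²} L^n A dy` depends linearly and boundedly on `A`, with a constant continuous in
`a ≠ 0` and `x`. This integral is the regularised limit because the cutoffs `e^{-εy²}` tend to `1`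
in `C^n(ℝ, r^θ)` for every `θ > 0`. -/

/-- The function `f` belongs to the ball of radius `M` in `C^n(ℝ, r^γ)`: a version of `MemCnR` with
an explicit constant, used to track the continuity of linear operators between these spaces. -/
def CnRBound {E : Type*} [NormedAddCommGroup E] [NormedSpace ℝ E] (n : ℕ) (γ M : ℝ) (f : ℝ → E) :
    Prop :=
  ContDiff ℝ n f ∧ ∀ k ≤ n, ∀ y : ℝ, ‖iteratedDeriv k f y‖ ≤ M * (1 + |y|) ^ γ

lemma integrable_one_add_abs_rpow {γ : ℝ} (hγ : γ < -1) :
    Integrable fun y : ℝ => (1 + |y|) ^ γ := by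
  simpa using integrable_one_add_norm (E := ℝ) (μ := volume) (r := -γ)
    (by rw [Module.finrank_self, Nat.cast_one]; linarith)

namespace CnRBound

variable {E : Type*} [NormedAddCommGroup E] [NormedSpace ℝ E] {n m : ℕ} {γ δ M N : ℝ}
  {f g : ℝ → E}

lemma norm_le (h : CnRBound n γ M f) (y : ℝ) : ‖f y‖ ≤ M * (1 + |y|) ^ γ := by
  simpa only [iteratedDeriv_zero] using h.2 0 n.zero_le y

lemma nonneg (h : CnRBound n γ M f) : 0 ≤ M := by
  simpa using (norm_nonneg (f 0)).trans (h.norm_le 0)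

lemma contDiffAt (h : CnRBound n γ M f) {k : ℕ} (hk : k ≤ n) (y : ℝ) : ContDiffAt ℝ k f y :=
  (h.1.of_le (by exact_mod_cast hk)).contDiffAt

lemma mono (h : CnRBound n γ M f) (hmn : m ≤ n) (hγ : γ ≤ δ) (hM : M ≤ N) :
    CnRBound m δ N f := by
  refine ⟨h.1.of_le (by exact_mod_cast hmn), fun k hk y => (h.2 k (hk.trans hmn) y).trans ?_⟩
  have hN : 0 ≤ N := h.nonneg.trans hM
  gcongr
  linarith [abs_nonneg y]

lemma deriv (h : CnRBound (n + 1) γ M f) : CnRBound n γ M (deriv f) := by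
  refine ⟨ContDiff.deriv' (by exact_mod_cast h.1), fun k hk y => ?_⟩
  rw [← iteratedDeriv_succ']
  exact h.2 (k + 1) (by lia) y

lemma of_continuous (hf : Continuous f) (hM : ∀ y, ‖f y‖ ≤ M * (1 + |y|) ^ γ) :
    CnRBound 0 γ M f := by
  refine ⟨contDiff_zero.2 hf, fun k hk y => ?_⟩
  obtain rfl : k = 0 := by lia
  simpa only [iteratedDeriv_zero] using hM y

lemma of_hasDerivAt (hf : ∀ y, HasDerivAt f (g y) y) (hM : ∀ y, ‖f y‖ ≤ M * (1 + |y|) ^ γ)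
    (hg : CnRBound n γ M g) : CnRBound (n + 1) γ M f := by
  have hderiv : _root_.deriv f = g := funext fun y => (hf y).deriv
  refine ⟨?_, fun k hk y => ?_⟩
  · push_cast
    exact contDiff_succ_iff_deriv.2 ⟨fun y => (hf y).differentiableAt, by simp, hderiv ▸ hg.1⟩
  · cases k with
    | zero => simpa only [iteratedDeriv_zero] using hM y
    | succ k =>
      rw [iteratedDeriv_succ', hderiv]
      exact hg.2 k (by lia) y

lemma const (n : ℕ) (c : E) : CnRBound n 0 ‖c‖ (fun _ => c) := by
  refine ⟨contDiff_const, fun k _ y => ?_⟩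
  rw [iteratedDeriv_const]
  split_ifs <;> simp

lemma sub (hf : CnRBound n γ M f) (hg : CnRBound n γ N g) :
    CnRBound n γ (M + N) (fun y => f y - g y) := by
  refine ⟨hf.1.sub hg.1, fun k hk y => ?_⟩
  rw [iteratedDeriv_fun_sub (hf.contDiffAt hk y) (hg.contDiffAt hk y), add_mul]
  exact norm_sub_le_of_le (hf.2 k hk y) (hg.2 k hk y)

lemma const_mul {𝔸 : Type*} [NormedRing 𝔸] [NormedAlgebra ℝ 𝔸] {f : ℝ → 𝔸}
    (hf : CnRBound n γ M f) (c : 𝔸) : CnRBound n γ (‖c‖ * M) (fun y => c * f y) := by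
  refine ⟨contDiff_const.mul hf.1, fun k hk y => ?_⟩
  rw [iteratedDeriv_const_mul c (hf.contDiffAt hk y), mul_assoc]
  exact norm_mul_le_of_le le_rfl (hf.2 k hk y)

lemma mul {𝔸 : Type*} [NormedRing 𝔸] [NormedAlgebra ℝ 𝔸] {f g : ℝ → 𝔸}
    (hf : CnRBound n γ M f) (hg : CnRBound n δ N g) :
    CnRBound n (γ + δ) (2 ^ n * (M * N)) (fun y => f y * g y) := by
  refine ⟨hf.1.mul hg.1, fun k hk y => ?_⟩
  have hM := hf.nonneg
  have hN := hg.nonneg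
  calc ‖iteratedDeriv k (fun y => f y * g y) y‖
      ≤ ∑ i ∈ Finset.range (k + 1),
          (k.choose i : ℝ) * ‖iteratedDeriv i f y‖ * ‖iteratedDeriv (k - i) g y‖ := by
        simpa only [norm_iteratedFDeriv_eq_norm_iteratedDeriv] using
          norm_iteratedFDeriv_mul_le hf.1 hg.1 y (by exact_mod_cast hk)
    _ ≤ ∑ i ∈ Finset.range (k + 1),
          (k.choose i : ℝ) * (M * (1 + |y|) ^ γ) * (N * (1 + |y|) ^ δ) := by
        gcongr with i hi
        · exact hf.2 i ((Finset.mem_range_succ_iff.1 hi).trans hk) y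
        · exact hg.2 (k - i) ((k.sub_le i).trans hk) y
    _ = 2 ^ k * (M * N * (1 + |y|) ^ (γ + δ)) := by
        rw [← Finset.sum_mul, ← Finset.sum_mul, ← Nat.cast_sum, Nat.sum_range_choose,
          Real.rpow_add (by positivity)]
        push_cast
        ring
    _ ≤ 2 ^ n * (M * N * (1 + |y|) ^ (γ + δ)) := by
        gcongr
        exact one_le_two
    _ = 2 ^ n * (M * N) * (1 + |y|) ^ (γ + δ) := by ring

lemma interpolate (hM : CnRBound n γ M f) (hN : CnRBound n δ N f) {θ : ℝ} (hθ₀ : 0 ≤ θ)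
    (hθ₁ : θ ≤ 1) :
    CnRBound n ((1 - θ) * γ + θ * δ) (M ^ (1 - θ) * N ^ θ) f := by
  refine ⟨hM.1, fun k hk y => ?_⟩
  have hM₀ := hM.nonneg
  have hN₀ := hN.nonneg
  have hr : 0 < 1 + |y| := by positivity
  have hθ' : 0 ≤ 1 - θ := by linarith
  calc ‖iteratedDeriv k f y‖
      = ‖iteratedDeriv k f y‖ ^ (1 - θ) * ‖iteratedDeriv k f y‖ ^ θ := by
        rw [← Real.rpow_add_of_nonneg (norm_nonneg _) hθ' hθ₀, sub_add_cancel, Real.rpow_one]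
    _ ≤ (M * (1 + |y|) ^ γ) ^ (1 - θ) * (N * (1 + |y|) ^ δ) ^ θ := by
        gcongr
        · exact hM.2 k hk y
        · exact hN.2 k hk y
    _ = M ^ (1 - θ) * N ^ θ * (1 + |y|) ^ ((1 - θ) * γ + θ * δ) := by
        rw [Real.mul_rpow hM₀ (by positivity), Real.mul_rpow hN₀ (by positivity),
          ← Real.rpow_mul hr.le, ← Real.rpow_mul hr.le, Real.rpow_add hr, mul_comm γ, mul_comm δ]
        ring

lemma norm_iteratedDeriv_comp_mul_left_le (h : CnRBound n γ M f) {k : ℕ} (hk : k ≤ n) {c : ℝ}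
    (hc : 0 ≤ c) (y : ℝ) :
    ‖iteratedDeriv k (fun y => f (c * y)) y‖ ≤ c ^ k * (M * (1 + |c * y|) ^ γ) := by
  rw [iteratedDeriv_comp_const_smul (h.1.of_le (by exact_mod_cast hk)), norm_smul, norm_pow,
    Real.norm_of_nonneg hc]
  gcongr
  exact h.2 k hk (c * y)

lemma comp_mul_left (h : CnRBound n γ M f) (hγ : γ ≤ 0) {c : ℝ} (hc₀ : 0 < c) (hc₁ : c ≤ 1) :
    CnRBound n γ (M * c ^ γ) (fun y => f (c * y)) := by
  refine ⟨h.1.comp (contDiff_const.mul contDiff_id), fun k hk y => ?_⟩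
  have hM := h.nonneg
  calc ‖iteratedDeriv k (fun y => f (c * y)) y‖
      ≤ c ^ k * (M * (1 + |c * y|) ^ γ) := h.norm_iteratedDeriv_comp_mul_left_le hk hc₀.le y
    _ ≤ 1 * (M * (c * (1 + |y|)) ^ γ) := by
        gcongr ?_ * (M * ?_)
        · exact pow_le_one₀ hc₀.le hc₁
        · refine Real.rpow_le_rpow_of_nonpos (by positivity) ?_ hγ
          rw [abs_mul, abs_of_pos hc₀]
          linarith
    _ = M * c ^ γ * (1 + |y|) ^ γ := by
        rw [Real.mul_rpow hc₀.le (by positivity)]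
        ring

lemma const_sub_comp_mul_left (h : CnRBound (n + 1) 0 M f) {c : ℝ} (hc₀ : 0 ≤ c) (hc₁ : c ≤ 1) :
    CnRBound (n + 1) 1 (M * c) (fun y => f 0 - f (c * y)) := by
  have hcomp : ContDiff ℝ (n + 1 : ℕ) (fun y => f (c * y)) :=
    h.1.comp (contDiff_const.mul contDiff_id)
  have hM := h.nonneg
  refine ⟨contDiff_const.sub hcomp, fun k hk y => ?_⟩
  rw [Real.rpow_one]
  cases k with
  | zero =>
    have hlip : ‖f (c * y) - f 0‖ ≤ M * ‖c * y - 0‖ :=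
      convex_univ.norm_image_sub_le_of_norm_deriv_le
        (fun z _ => h.1.differentiable (by simp) z)
        (fun z _ => by simpa using h.deriv.norm_le z) (mem_univ _) (mem_univ _)
    rw [iteratedDeriv_zero, norm_sub_rev]
    calc ‖f (c * y) - f 0‖ ≤ M * ‖c * y - 0‖ := hlip
      _ = M * c * |y| := by rw [sub_zero, norm_mul, Real.norm_of_nonneg hc₀, Real.norm_eq_abs]; ring
      _ ≤ M * c * (1 + |y|) := by gcongr; linarith
  | succ k =>
    rw [iteratedDeriv_fun_sub contDiffAt_const (hcomp.of_le (by exact_mod_cast hk)).contDiffAt,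
      iteratedDeriv_const, if_neg k.succ_ne_zero, zero_sub, norm_neg]
    calc ‖iteratedDeriv (k + 1) (fun y => f (c * y)) y‖
        ≤ c ^ (k + 1) * (M * (1 + |c * y|) ^ (0 : ℝ)) :=
          h.norm_iteratedDeriv_comp_mul_left_le hk hc₀ y
      _ = c ^ k * (M * c) := by rw [Real.rpow_zero]; ring
      _ ≤ 1 * (M * c) := by gcongr; exact pow_le_one₀ hc₀ hc₁
      _ ≤ M * c * (1 + |y|) := by
          rw [one_mul]
          exact le_mul_of_one_le_right (by positivity) (by linarith [abs_nonneg y])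

lemma const_sub_comp_mul_left_interpolate (h : CnRBound (n + 1) 0 M f) {c θ : ℝ} (hc₀ : 0 < c)
    (hc₁ : c ≤ 1) (hθ₀ : 0 ≤ θ) (hθ₁ : θ ≤ 1) :
    CnRBound n θ ((‖f 0‖ + M) ^ (1 - θ) * (M * c) ^ θ) (fun y => f 0 - f (c * y)) := by
  have hflat : CnRBound (n + 1) 0 (‖f 0‖ + M) fun y => f 0 - f (c * y) := by
    simpa using (const (n + 1) (f 0)).sub (h.comp_mul_left le_rfl hc₀ hc₁)
  exact (hflat.interpolate (h.const_sub_comp_mul_left hc₀.le hc₁) hθ₀ hθ₁).mono n.le_succ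
    (by simp) le_rfl

lemma integrable (h : CnRBound n γ M f) (hγ : γ < -1) : Integrable f :=
  ((integrable_one_add_abs_rpow hγ).const_mul M).mono'
    h.1.continuous.aestronglyMeasurable (ae_of_all _ h.norm_le)

lemma integral_norm_le (h : CnRBound n γ M f) (hγ : γ < -1) :
    ∫ y, ‖f y‖ ≤ M * ∫ y : ℝ, (1 + |y|) ^ γ := by
  rw [← integral_const_mul]
  exact integral_mono (h.integrable hγ).norm ((integrable_one_add_abs_rpow hγ).const_mul M)
    h.norm_le

lemma memCnR {f : ℝ → ℂ} (h : CnRBound n γ M f) : MemCnR n γ f :=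
  ⟨h.1, M, h.nonneg, h.2⟩

end CnRBound

namespace MemCnR

variable {n : ℕ} {γ : ℝ} {f g : ℝ → ℂ}

lemma cnRBound (h : MemCnR n γ f) : CnRBound n γ (CnRNorm n γ f) f := by
  obtain ⟨hf, M, -, hM⟩ := h
  refine ⟨hf, fun k hk y => ?_⟩
  have hr (z : ℝ) : 0 < (1 + |z|) ^ γ := by positivity
  have hbdd : BddAbove (range fun y : ℝ => ‖iteratedDeriv k f y‖ / (1 + |y|) ^ γ) :=
    ⟨M, forall_mem_range.2 fun z => (div_le_iff₀ (hr z)).2 (hM k hk z)⟩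
  have hsup : ⨆ y : ℝ, ‖iteratedDeriv k f y‖ / (1 + |y|) ^ γ ≤ CnRNorm n γ f :=
    le_ciSup (f := fun k : Fin (n + 1) => ⨆ y : ℝ, ‖iteratedDeriv (k : ℕ) f y‖ / (1 + |y|) ^ γ)
      (finite_range _).bddAbove ⟨k, by lia⟩
  exact (div_le_iff₀ (hr y)).1 ((le_ciSup hbdd y).trans hsup)

lemma sub (hf : MemCnR n γ f) (hg : MemCnR n γ g) : MemCnR n γ (fun y => f y - g y) :=
  (hf.cnRBound.sub hg.cnRBound).memCnR

end MemCnR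

lemma hasDerivAt_ofReal_const_sub (x y : ℝ) : HasDerivAt (fun y : ℝ => (x : ℂ) - y) (-1) y := by
  simpa using (Complex.ofRealCLM.hasDerivAt (x := y)).const_sub (x : ℂ)

lemma cnRBound_ofReal_const_sub (n : ℕ) (x : ℝ) :
    CnRBound n 1 (1 + |x|) (fun y : ℝ => (x : ℂ) - y) := by
  have hsucc : CnRBound (n + 1) 1 (1 + |x|) (fun y : ℝ => (x : ℂ) - y) := by
    refine .of_hasDerivAt (hasDerivAt_ofReal_const_sub x) (fun y => ?_)
      ((CnRBound.const n (-1)).mono le_rfl zero_le_one (by simp))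
    rw [← Complex.ofReal_sub, Complex.norm_real, Real.norm_eq_abs, Real.rpow_one]
    nlinarith [abs_sub x y, mul_nonneg (abs_nonneg x) (abs_nonneg y)]
  exact hsucc.mono n.le_succ le_rfl le_rfl

/-- The oscillating factor `e^{ia(y-x)²}` of the Green's function. -/
def phase (a x y : ℝ) : ℂ := Complex.exp ((a * (y - x) ^ 2 : ℝ) * Complex.I)

/-- The weight `(1 + 2ia(y-x)²)⁻¹`, chosen such that
`phase a x y = ibpWeight a x y * d/dy ((y - x) * phase a x y)`. -/
def ibpWeight (a x y : ℝ) : ℂ := (1 + (2 * a * (y - x) ^ 2 : ℝ) * Complex.I)⁻¹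

/-- The operator by which integration by parts against `phase a x` acts on amplitudes: the transpose
of `ibpWeight a x * d/dy ∘ (y - x)`. -/
def ibpOp (a x : ℝ) (A : ℝ → ℂ) (y : ℝ) : ℂ :=
  (x - y) * deriv (fun u => ibpWeight a x u * A u) y

/-- The oscillatory integral `∫ e^{ia(y-x)²} A(y) dy`, regularised by `n` integrations by parts. -/
def oscIntegral (n : ℕ) (a x : ℝ) (A : ℝ → ℂ) : ℂ :=
  ∫ y, phase a x y * (ibpOp a x)^[n] A y

section Phase

variable (a x y : ℝ)

lemma norm_phase : ‖phase a x y‖ = 1 :=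
  Complex.norm_exp_ofReal_mul_I _

lemma hasDerivAt_mul_sub_sq : HasDerivAt (fun y => a * (y - x) ^ 2) (2 * a * (y - x)) y := by
  refine ((((hasDerivAt_id y).sub_const x).pow 2).const_mul a).congr_deriv ?_
  simp only [Nat.cast_ofNat, id_eq, Nat.add_one_sub_one, pow_one, mul_one]
  ring

lemma hasDerivAt_phase :
    HasDerivAt (phase a x) (2 * Complex.I * a * (y - x) * phase a x y) y := by
  refine ((hasDerivAt_mul_sub_sq a x y).ofReal_comp.mul_const Complex.I).cexp.congr_deriv ?_
  rw [phase]
  push_cast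
  ring

lemma continuous_phase : Continuous (phase a x) :=
  continuous_iff_continuousAt.2 fun y => (hasDerivAt_phase a x y).continuousAt

lemma ibpWeight_denom_ne_zero : 1 + ((2 * a * (y - x) ^ 2 : ℝ) : ℂ) * Complex.I ≠ 0 :=
  fun h => by
    simpa only [Complex.add_re, Complex.one_re, Complex.re_ofReal_mul, Complex.I_re, mul_zero,
      add_zero, Complex.zero_re, one_ne_zero] using congrArg Complex.re h

lemma hasDerivAt_ibpWeight :
    HasDerivAt (ibpWeight a x)
      (4 * Complex.I * a * ((x - y) * (ibpWeight a x y * ibpWeight a x y))) y := by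
  have hdenom := ((hasDerivAt_mul_sub_sq (2 * a) x y).ofReal_comp.mul_const Complex.I).const_add 1
  refine (hdenom.inv (ibpWeight_denom_ne_zero a x y)).congr_deriv ?_
  rw [ibpWeight, div_eq_mul_inv, ← inv_pow]
  push_cast
  ring

lemma contDiff_ibpWeight (n : ℕ) : ContDiff ℝ n (ibpWeight a x) := by
  refine ContDiff.inv ?_ (ibpWeight_denom_ne_zero a x)
  have hquad : ContDiff ℝ n fun y => 2 * a * (y - x) ^ 2 := by fun_prop
  exact contDiff_const.add ((Complex.ofRealCLM.contDiff.comp hquad).mul contDiff_const)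

end Phase

lemma norm_ibpWeight_le {a : ℝ} (ha : a ≠ 0) (x y : ℝ) :
    ‖ibpWeight a x y‖ ≤ (2 * (1 + |x|) ^ 2 + |a|⁻¹) * (1 + |y|) ^ (-2 : ℝ) := by
  have ha' : 0 < |a| := abs_pos.2 ha
  set D : ℂ := 1 + ((2 * a * (y - x) ^ 2 : ℝ) : ℂ) * Complex.I with hD
  have hre : D.re = 1 := by
    simp only [hD, Complex.add_re, Complex.one_re, Complex.re_ofReal_mul, Complex.I_re, mul_zero,
      add_zero]
  have him : D.im = 2 * a * (y - x) ^ 2 := by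
    simp only [hD, Complex.add_im, Complex.one_im, Complex.im_ofReal_mul, Complex.I_im, mul_one,
      zero_add]
  have hone : 1 ≤ ‖D‖ := by simpa [hre] using D.abs_re_le_norm
  have hsq : 2 * |a| * (y - x) ^ 2 ≤ ‖D‖ := by simpa [him, abs_mul] using D.abs_im_le_norm
  have hquad : 2 * (y - x) ^ 2 ≤ |a|⁻¹ * ‖D‖ := by
    rw [← div_eq_inv_mul, le_div_iff₀ ha']
    linarith
  have htri : 1 + |y| ≤ (1 + |x|) + |y - x| := by linarith [abs_sub_abs_le_abs_sub y x]
  have hr : (1 + |y|) ^ 2 ≤ (2 * (1 + |x|) ^ 2 + |a|⁻¹) * ‖D‖ :=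
    calc (1 + |y|) ^ 2 ≤ ((1 + |x|) + |y - x|) ^ 2 := by gcongr
      _ ≤ 2 * ((1 + |x|) ^ 2 + |y - x| ^ 2) := add_sq_le
      _ = 2 * (1 + |x|) ^ 2 * 1 + 2 * (y - x) ^ 2 := by rw [sq_abs]; ring
      _ ≤ 2 * (1 + |x|) ^ 2 * ‖D‖ + |a|⁻¹ * ‖D‖ := by gcongr
      _ = (2 * (1 + |x|) ^ 2 + |a|⁻¹) * ‖D‖ := by ring
  rw [ibpWeight, ← hD, norm_inv, Real.rpow_neg (by positivity), Real.rpow_two, ← div_eq_mul_inv,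
    inv_le_comm₀ (by positivity) (by positivity), inv_div, div_le_iff₀' (by positivity)]
  exact hr

lemma exists_cnRBound_ibpWeight (n : ℕ) :
    ∃ C : ℝ × ℝ → ℝ, ContinuousOn C {p | p.1 ≠ 0} ∧
      ∀ a x, a ≠ 0 → CnRBound n (-2) (C (a, x)) (ibpWeight a x) := by
  have hC₀ : ContinuousOn (fun p : ℝ × ℝ => 2 * (1 + |p.2|) ^ 2 + |p.1|⁻¹) {p | p.1 ≠ 0} :=
    ContinuousOn.add (by fun_prop)
      (continuous_fst.abs.continuousOn.inv₀ fun p hp => abs_ne_zero.2 hp)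
  induction n with
  | zero =>
    exact ⟨_, hC₀, fun a x ha =>
      .of_continuous (contDiff_ibpWeight a x 0).continuous (norm_ibpWeight_le ha x)⟩
  | succ n ih =>
    obtain ⟨C, hC, hw⟩ := ih
    refine ⟨fun p => max (2 * (1 + |p.2|) ^ 2 + |p.1|⁻¹)
      (4 * |p.1| * (2 ^ n * ((1 + |p.2|) * (2 ^ n * (C p * C p))))),
      hC₀.sup (by fun_prop), fun a x ha => ?_⟩
    refine .of_hasDerivAt (hasDerivAt_ibpWeight a x) (fun y => ?_) ?_
    · exact (norm_ibpWeight_le ha x y).trans (by gcongr; exact le_max_left _ _)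
    · have hsq := (hw a x ha).mul (hw a x ha)
      refine (((cnRBound_ofReal_const_sub n x).mul hsq).const_mul (4 * Complex.I * a)).mono
        le_rfl (by norm_num) (le_max_of_le_right (by simp))

section IbpOp

variable {a x γ M : ℝ} {n : ℕ} {A B : ℝ → ℂ}

lemma cnRBound_ibpOp {C : ℝ} (hw : CnRBound (n + 1) (-2) C (ibpWeight a x))
    (hA : CnRBound (n + 1) γ M A) :
    CnRBound n (γ - 1) (2 ^ n * ((1 + |x|) * (2 ^ (n + 1) * (C * M)))) (ibpOp a x A) :=
  ((cnRBound_ofReal_const_sub n x).mul (hw.mul hA).deriv).mono le_rfl (by linarith) le_rfl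

lemma contDiff_ibpOp (hA : ContDiff ℝ (n + 1 : ℕ) A) : ContDiff ℝ n (ibpOp a x A) := by
  have hwA : ContDiff ℝ (n + 1 : ℕ) fun u => ibpWeight a x u * A u :=
    (contDiff_ibpWeight a x (n + 1)).mul hA
  exact (cnRBound_ofReal_const_sub n x).1.mul (ContDiff.deriv' (by exact_mod_cast hwA))

lemma ibpOp_sub (hA : Differentiable ℝ A) (hB : Differentiable ℝ B) :
    ibpOp a x (fun y => A y - B y) = fun y => ibpOp a x A y - ibpOp a x B y := by
  funext y
  have hw : DifferentiableAt ℝ (ibpWeight a x) y := (hasDerivAt_ibpWeight a x y).differentiableAt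
  simp only [ibpOp, mul_sub]
  rw [deriv_fun_sub (hw.fun_mul (hA y)) (hw.fun_mul (hB y)), mul_sub]

lemma iterate_ibpOp_sub (n : ℕ) {A B : ℝ → ℂ} (hA : ContDiff ℝ n A) (hB : ContDiff ℝ n B) :
    (ibpOp a x)^[n] (fun y => A y - B y) =
      fun y => (ibpOp a x)^[n] A y - (ibpOp a x)^[n] B y := by
  induction n generalizing A B with
  | zero => rfl
  | succ n ih =>
    simp only [Function.iterate_succ_apply]
    rw [ibpOp_sub (hA.differentiable (by simp)) (hB.differentiable (by simp))]
    exact ih (contDiff_ibpOp hA) (contDiff_ibpOp hB)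

lemma exists_cnRBound_iterate_ibpOp (n : ℕ) :
    ∃ C : ℝ × ℝ → ℝ, ContinuousOn C {p | p.1 ≠ 0} ∧
      ∀ {a x}, a ≠ 0 → ∀ {γ M A}, CnRBound n γ M A →
        CnRBound 0 (γ - n) (C (a, x) * M) ((ibpOp a x)^[n] A) := by
  induction n with
  | zero => exact ⟨fun _ => 1, continuousOn_const, fun _ _ _ _ hA => by simpa using hA⟩
  | succ n ih =>
    obtain ⟨C, hC, hL⟩ := ih
    obtain ⟨W, hW, hw⟩ := exists_cnRBound_ibpWeight (n + 1)
    refine ⟨fun p => C p * (2 ^ n * ((1 + |p.2|) * (2 ^ (n + 1) * W p))), by fun_prop,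
      fun {a x} ha γ M A hA => ?_⟩
    rw [Function.iterate_succ_apply]
    refine (hL ha (cnRBound_ibpOp (hw a x ha) hA)).mono le_rfl ?_ (le_of_eq ?_)
    · push_cast
      linarith
    · ring

lemma integrable_phase_mul (hγ : γ < -1) (hA : CnRBound n γ M A) :
    Integrable fun y => phase a x y * A y :=
  (hA.integrable hγ).bdd_mul (continuous_phase a x).aestronglyMeasurable
    (ae_of_all _ fun y => (norm_phase a x y).le)

lemma norm_integral_phase_mul_le (hγ : γ < -1) (hA : CnRBound n γ M A) :
    ‖∫ y, phase a x y * A y‖ ≤ M * ∫ y : ℝ, (1 + |y|) ^ γ := by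
  refine (norm_integral_le_integral_norm _).trans ?_
  simpa only [norm_mul, norm_phase, one_mul] using hA.integral_norm_le hγ

lemma hasDerivAt_phase_mul_ibpWeight_mul {y : ℝ} (hA : DifferentiableAt ℝ A y) :
    HasDerivAt (fun y => phase a x y * ((x - y) * (ibpWeight a x y * A y)))
      (phase a x y * ibpOp a x A y - phase a x y * A y) y := by
  have hwA : DifferentiableAt ℝ (fun u => ibpWeight a x u * A u) y :=
    (hasDerivAt_ibpWeight a x y).differentiableAt.fun_mul hA
  refine ((hasDerivAt_phase a x y).mul
    ((hasDerivAt_ofReal_const_sub x y).mul hwA.hasDerivAt)).congr_deriv ?_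
  have hcancel : (1 + 2 * Complex.I * a * (y - x) ^ 2) * ibpWeight a x y = 1 := by
    rw [ibpWeight]
    convert mul_inv_cancel₀ (ibpWeight_denom_ne_zero a x y) using 2
    push_cast
    ring
  simp only [ibpOp, Pi.mul_apply]
  linear_combination -(phase a x y * A y) * hcancel

lemma integral_phase_mul_eq_ibpOp (ha : a ≠ 0) (hγ : γ < -1) (hA : CnRBound 1 γ M A) :
    ∫ y, phase a x y * A y = ∫ y, phase a x y * ibpOp a x A y := by
  obtain ⟨C, -, hw⟩ := exists_cnRBound_ibpWeight 1
  have hLA := integrable_phase_mul (a := a) (x := x) (by linarith) (cnRBound_ibpOp (hw a x ha) hA)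
  have hA' := integrable_phase_mul (a := a) (x := x) hγ hA
  have hboundary : Integrable fun y => phase a x y * ((x - y) * (ibpWeight a x y * A y)) :=
    integrable_phase_mul (by linarith) ((cnRBound_ofReal_const_sub 1 x).mul ((hw a x ha).mul hA))
  have hzero := integral_eq_zero_of_hasDerivAt_of_integrable
    (fun y => hasDerivAt_phase_mul_ibpWeight_mul (hA.1.differentiable (by simp) y))
    (hLA.sub hA') hboundary
  rw [integral_sub hLA hA'] at hzero
  exact (sub_eq_zero.1 hzero).symm

lemma integral_phase_mul_eq_oscIntegral (ha : a ≠ 0) (n : ℕ) {γ M : ℝ} {A : ℝ → ℂ} (hγ : γ < -1)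
    (hA : CnRBound n γ M A) : ∫ y, phase a x y * A y = oscIntegral n a x A := by
  induction n generalizing γ M A with
  | zero => rfl
  | succ n ih =>
    obtain ⟨C, -, hw⟩ := exists_cnRBound_ibpWeight (n + 1)
    rw [integral_phase_mul_eq_ibpOp ha hγ (hA.mono (by lia) le_rfl le_rfl),
      ih (by linarith) (cnRBound_ibpOp (hw a x ha) hA)]
    rfl

end IbpOp

lemma exists_norm_oscIntegral_le (n : ℕ) {γ : ℝ} (hγ : γ < n - 1) :
    ∃ C : ℝ × ℝ → ℝ, ContinuousOn C {p | p.1 ≠ 0} ∧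
      ∀ {a x}, a ≠ 0 → ∀ {M A}, CnRBound n γ M A → ‖oscIntegral n a x A‖ ≤ C (a, x) * M := by
  obtain ⟨C, hC, hL⟩ := exists_cnRBound_iterate_ibpOp n
  refine ⟨fun p => C p * ∫ y : ℝ, (1 + |y|) ^ (γ - n), by fun_prop, fun {a x} ha M A hA => ?_⟩
  exact (norm_integral_phase_mul_le (by linarith) (hL ha hA)).trans_eq (by ring)

lemma oscIntegral_sub {n : ℕ} {a x γ M N : ℝ} {A B : ℝ → ℂ} (ha : a ≠ 0) (hγ : γ < n - 1)
    (hA : CnRBound n γ M A) (hB : CnRBound n γ N B) :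
    oscIntegral n a x (fun y => A y - B y) = oscIntegral n a x A - oscIntegral n a x B := by
  obtain ⟨C, -, hL⟩ := exists_cnRBound_iterate_ibpOp n
  have hint {M A} (hA : CnRBound n γ M A) :
      Integrable fun y => phase a x y * (ibpOp a x)^[n] A y :=
    integrable_phase_mul (by linarith) (hL ha hA)
  simp only [oscIntegral, iterate_ibpOp_sub n hA.1 hB.1, mul_sub]
  exact integral_sub (hint hA) (hint hB)

lemma tendsto_oscIntegral {ι : Type*} {l : Filter ι} {n : ℕ} {a x γ N : ℝ} {A : ℝ → ℂ}
    {B : ι → ℝ → ℂ} {M : ι → ℝ} (ha : a ≠ 0) (hγ : γ < n - 1) (hA : CnRBound n γ N A)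
    (hM : Tendsto M l (𝓝 0)) (hBA : ∀ᶠ i in l, CnRBound n γ (M i) (fun y => A y - B i y)) :
    Tendsto (fun i => oscIntegral n a x (B i)) l (𝓝 (oscIntegral n a x A)) := by
  obtain ⟨C, -, hC⟩ := exists_norm_oscIntegral_le n hγ
  have hlim : Tendsto (fun i => C (a, x) * M i) l (𝓝 0) := by
    simpa only [mul_zero] using hM.const_mul (C (a, x))
  refine tendsto_iff_norm_sub_tendsto_zero.2 (squeeze_zero' (.of_forall fun _ => norm_nonneg _) ?_
    hlim)
  filter_upwards [hBA] with i hi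
  have hB : oscIntegral n a x (B i) =
      oscIntegral n a x A - oscIntegral n a x (fun y => A y - B i y) := by
    simpa only [_root_.sub_sub_cancel] using oscIntegral_sub (x := x) ha hγ hA hi
  rw [hB, norm_sub_rev, _root_.sub_sub_cancel]
  exact hC ha hi

lemma tendsto_integral_phase_mul_cutoff {n : ℕ} {a x γ M : ℝ} {χ A : ℝ → ℂ} (ha : a ≠ 0)
    (hγ : γ < n - 1) (hχ₀ : χ 0 = 1) (hχ : ∀ s, ∃ C, CnRBound (n + 1) s C χ)
    (hA : CnRBound n γ M A) :
    Tendsto (fun δ => ∫ y, phase a x y * (χ (δ * y) * A y)) (𝓝[>] 0)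
      (𝓝 (oscIntegral n a x A)) := by
  obtain ⟨C, hC⟩ := hχ 0
  obtain ⟨D, hD⟩ := hχ (min 0 (-2 - γ))
  obtain ⟨θ, hθ₀, hθ⟩ : ∃ θ, 0 < θ ∧ θ < min 1 (n - 1 - γ) :=
    exists_between (lt_min one_pos (by linarith))
  obtain ⟨hθ₁, hθγ⟩ := lt_min_iff.1 hθ
  have hsmall : ∀ᶠ δ : ℝ in 𝓝[>] 0, 0 < δ ∧ δ ≤ 1 := Ioc_mem_nhdsGT one_pos
  have hint : ∀ᶠ δ in 𝓝[>] (0 : ℝ), oscIntegral n a x (fun y => χ (δ * y) * A y) =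
      ∫ y, phase a x y * (χ (δ * y) * A y) := by
    filter_upwards [hsmall] with δ ⟨hδ₀, hδ₁⟩
    have hχδ := (hD.comp_mul_left (min_le_left _ _) hδ₀ hδ₁).mono n.le_succ (min_le_right _ _)
      le_rfl
    exact (integral_phase_mul_eq_oscIntegral ha n (by linarith) (hχδ.mul hA)).symm
  have hlim : Tendsto (fun δ : ℝ => 2 ^ n * ((1 + C) ^ (1 - θ) * (C * δ) ^ θ * M)) (𝓝[>] 0)
      (𝓝 0) := by
    have hcont : Continuous fun δ : ℝ => 2 ^ n * ((1 + C) ^ (1 - θ) * (C * δ) ^ θ * M) := by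
      fun_prop (disch := exact hθ₀.le)
    simpa [hθ₀.ne'] using (hcont.tendsto 0).mono_left nhdsWithin_le_nhds
  refine (tendsto_oscIntegral (γ := γ + θ) ha (by linarith)
    (hA.mono le_rfl (by linarith) le_rfl) hlim ?_).congr' hint
  filter_upwards [hsmall] with δ ⟨hδ₀, hδ₁⟩
  have hmul := (hC.const_sub_comp_mul_left_interpolate hδ₀ hδ₁ hθ₀.le hθ₁.le).mul hA
  simp only [hχ₀, norm_one, sub_mul, one_mul] at hmul
  exact hmul.mono le_rfl (by linarith) le_rfl

/-- The Gaussian `e^{-y²}`, whose rescalings `gaussian (√ε * y)` are the cutoffs `e^{-εy²}`. -/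
def gaussian (y : ℝ) : ℂ := (Real.exp (-y ^ 2) : ℝ)

lemma gaussian_zero : gaussian 0 = 1 := by
  simp [gaussian]

lemma hasDerivAt_gaussian (y : ℝ) : HasDerivAt gaussian (2 * (-y * gaussian y)) y := by
  refine ((hasDerivAt_id y).pow 2).neg.exp.ofReal_comp.congr_deriv ?_
  simp only [gaussian, id_eq, Pi.neg_apply, Pi.pow_apply]
  push_cast
  ring

lemma norm_gaussian_le (s : ℕ) (y : ℝ) :
    ‖gaussian y‖ ≤ s.factorial * Real.exp 2 * (1 + |y|) ^ (-s : ℝ) := by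
  have hr : 0 < 1 + |y| := by positivity
  have hpow : (1 + |y|) ^ s ≤ s.factorial * Real.exp (1 + |y|) :=
    (div_le_iff₀' (by positivity)).1 (Real.pow_div_factorial_le_exp _ hr.le s)
  have hexp : -y ^ 2 + (1 + |y|) ≤ 2 := by nlinarith [sq_abs y, sq_nonneg (|y| - 1)]
  rw [gaussian, Complex.norm_real, Real.norm_eq_abs, Real.abs_exp, Real.rpow_neg hr.le,
    Real.rpow_natCast, ← div_eq_mul_inv, le_div_iff₀ (by positivity)]
  calc Real.exp (-y ^ 2) * (1 + |y|) ^ s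
      ≤ Real.exp (-y ^ 2) * (s.factorial * Real.exp (1 + |y|)) := by gcongr
    _ = s.factorial * Real.exp (-y ^ 2 + (1 + |y|)) := by
        rw [Real.exp_add (-y ^ 2)]
        ring
    _ ≤ s.factorial * Real.exp 2 := by gcongr

lemma exists_cnRBound_gaussian (n : ℕ) (s : ℝ) : ∃ C, CnRBound n s C gaussian := by
  have hdecay (s : ℝ) : ∃ C, ∀ y, ‖gaussian y‖ ≤ C * (1 + |y|) ^ s := by
    refine ⟨⌈-s⌉₊.factorial * Real.exp 2, fun y => (norm_gaussian_le ⌈-s⌉₊ y).trans ?_⟩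
    gcongr
    · linarith [abs_nonneg y]
    · linarith [Nat.le_ceil (-s)]
  induction n generalizing s with
  | zero =>
    obtain ⟨C, hC⟩ := hdecay s
    exact ⟨C, .of_continuous
      (continuous_iff_continuousAt.2 fun y => (hasDerivAt_gaussian y).continuousAt) hC⟩
  | succ n ih =>
    obtain ⟨C, hC⟩ := hdecay s
    obtain ⟨D, hD⟩ := ih (s - 1)
    have hneg : CnRBound n 1 1 fun y : ℝ => -(y : ℂ) := by
      simpa using cnRBound_ofReal_const_sub n 0
    exact ⟨_, .of_hasDerivAt hasDerivAt_gaussian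
      (fun y => (hC y).trans (by gcongr; exact le_max_left _ _))
      (((hneg.mul hD).const_mul 2).mono le_rfl (by linarith)
        (le_max_right _ _))⟩

lemma tendsto_integral_gaussian_cutoff {n : ℕ} {a γ M : ℝ} {A : ℝ → ℂ} (ha : a ≠ 0)
    (hγ : γ < n - 1) (hA : CnRBound n γ M A) (x : ℝ) :
    Tendsto (fun ε : ℝ => ∫ y : ℝ,
        Complex.exp (-(ε : ℂ) * y ^ 2) * (Complex.exp (Complex.I * a * ((y : ℂ) - x) ^ 2) * A y))
      (𝓝[>] 0) (𝓝 (oscIntegral n a x A)) := by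
  have hsqrt : Tendsto Real.sqrt (𝓝[>] 0) (𝓝[>] 0) := by
    refine tendsto_nhdsWithin_iff.2 ⟨?_, eventually_mem_nhdsWithin.mono fun ε => Real.sqrt_pos.2⟩
    simpa using (Real.continuous_sqrt.tendsto 0).mono_left nhdsWithin_le_nhds
  refine ((tendsto_integral_phase_mul_cutoff (x := x) ha hγ gaussian_zero
    (exists_cnRBound_gaussian (n + 1)) hA).comp hsqrt).congr' ?_
  filter_upwards [self_mem_nhdsWithin] with ε (hε : 0 < ε)
  have hcutoff (y : ℝ) : gaussian (√ε * y) = Complex.exp (-(ε : ℂ) * y ^ 2) := by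
    rw [gaussian, mul_pow, Real.sq_sqrt hε.le]
    push_cast
    ring_nf
  have hphase (y : ℝ) : phase a x y = Complex.exp (Complex.I * a * ((y : ℂ) - x) ^ 2) := by
    rw [phase]
    push_cast
    ring_nf
  refine integral_congr_ae (ae_of_all _ fun y => ?_)
  simp only [hcutoff, hphase]
  ring

lemma exists_eventually_norm_oscIntegral_mul_le {τ : Type*} [TopologicalSpace τ] {S : Set τ}
    {a : τ → ℝ} {n : ℕ} {α β : ℝ} {K : τ → ℝ → ℝ → ℂ} (ha : ContinuousOn a S)
    (ha₀ : ∀ t ∈ S, a t ≠ 0) (hn : α + β + 1 < n) (hK : ∀ t ∈ S, ∀ x, MemCnR n α (K t x))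
    {t₀ : τ} (ht₀ : t₀ ∈ S) {x₀ M : ℝ}
    (hM : ∀ᶠ p in 𝓝[S ×ˢ univ] (t₀, x₀), CnRNorm n α (K p.1 p.2) ≤ M) :
    ∃ C, ∀ᶠ p in 𝓝[S ×ˢ univ] (t₀, x₀), ∀ H, MemCnR n β H →
      ‖oscIntegral n (a p.1) p.2 (fun y => K p.1 p.2 y * H y)‖ ≤ C * CnRNorm n β H := by
  obtain ⟨C, hC, hosc⟩ := exists_norm_oscIntegral_le n (γ := α + β) (by linarith)
  have hcont : ContinuousOn (fun p : τ × ℝ => C (a p.1, p.2)) (S ×ˢ univ) :=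
    hC.comp ((ha.comp continuousOn_fst fun p hp => hp.1).prodMk continuousOn_snd)
      fun p hp => ha₀ p.1 hp.1
  set B : ℝ := |C (a t₀, x₀)| + 1
  have hB : ∀ᶠ p in 𝓝[S ×ˢ univ] (t₀, x₀), C (a p.1, p.2) ≤ B :=
    (hcont (t₀, x₀) ⟨ht₀, mem_univ _⟩).eventually_le_const
      ((le_abs_self _).trans_lt (lt_add_one _))
  refine ⟨B * (2 ^ n * M), ?_⟩
  filter_upwards [hM, hB, self_mem_nhdsWithin] with ⟨t, x⟩ hMp hBp hp H hH
  have ht : t ∈ S := hp.1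
  have hKb := (hK t ht x).cnRBound
  have hK₀ := hKb.nonneg
  have hH₀ := hH.cnRBound.nonneg
  calc ‖oscIntegral n (a t) x (fun y => K t x y * H y)‖
      ≤ C (a t, x) * (2 ^ n * (CnRNorm n α (K t x) * CnRNorm n β H)) :=
        hosc (ha₀ t ht) (hKb.mul hH.cnRBound)
    _ ≤ B * (2 ^ n * (M * CnRNorm n β H)) := by gcongr
    _ = B * (2 ^ n * M) * CnRNorm n β H := by ring

lemma IsACOn.continuousOn {E : Type*} [NormedAddCommGroup E] [NormedSpace ℝ E] {S : Set ℝ}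
    {g : ℝ → E} (hg : IsACOn S g) (hS : IsOpen S) : ContinuousOn g S := by
  obtain ⟨h, hh, hgh⟩ := hg
  intro t ht
  obtain ⟨u, v, htuv, hnhds, hsub⟩ := exists_Icc_mem_subset_of_mem_nhds (hS.mem_nhds ht)
  have huv : u ≤ v := htuv.1.trans htuv.2
  have hint : IntegrableOn h (uIcc u v) := by
    rw [uIcc_of_le huv]
    exact hh.integrableOn_compact_subset hsub isCompact_Icc
  have hprim : ContinuousOn (fun s => g u + ∫ r in u..s, h r) (Icc u v) := by
    rw [← uIcc_of_le huv]
    exact continuousOn_const.add (intervalIntegral.continuousOn_primitive_interval hint)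
  have hg_eq : EqOn g (fun s => g u + ∫ r in u..s, h r) (Icc u v) := by
    intro s hs
    rcases hs.1.eq_or_lt with rfl | hus
    · simp
    · exact eq_add_of_sub_eq' (hgh u (hsub (left_mem_Icc.2 huv)) s (hsub hs) hus)
  exact ((hprim.congr hg_eq).continuousAt hnhds).continuousWithinAt

theorem stmt18_general {τ ι : Type*} [TopologicalSpace τ] {S : Set τ} {G Gt : τ → ℝ → ℝ → ℂ}
    {a : τ → ℝ} {n : ℕ} {α β : ℝ} (ha : ContinuousOn a S) (ha₀ : ∀ t ∈ S, a t ≠ 0)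
    (hdecomp : ∀ t ∈ S, ∀ x y : ℝ,
      G t x y = Complex.exp (Complex.I * a t * ((y : ℂ) - x) ^ 2) * Gt t x y)
    (hn : α + β + 1 < n) (hGt : ∀ t ∈ S, ∀ x, MemCnR n α (Gt t x))
    (hbdd : ∀ t ∈ S, ∀ x : ℝ, ∃ M : ℝ, ∀ᶠ p in 𝓝[S ×ˢ univ] (t, x),
      CnRNorm n α (Gt p.1 p.2) ≤ M)
    {l : Filter ι} {F : ℝ → ℂ} {Fm : ι → ℝ → ℂ} (hF : MemCnR n β F) (hFm : ∀ m, MemCnR n β (Fm m))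
    (hconv : Tendsto (fun m => CnRNorm n β (fun y => F y - Fm m y)) l (𝓝 0)) :
    ∃ (Ψ : τ → ℝ → ℂ) (Ψm : ι → τ → ℝ → ℂ),
      (∀ t ∈ S, ∀ x : ℝ,
        Tendsto (fun ε : ℝ => ∫ y : ℝ, Complex.exp (-(ε : ℂ) * y ^ 2) * G t x y * F y)
          (𝓝[>] 0) (𝓝 (Ψ t x))) ∧
      (∀ m, ∀ t ∈ S, ∀ x : ℝ,
        Tendsto (fun ε : ℝ => ∫ y : ℝ, Complex.exp (-(ε : ℂ) * y ^ 2) * G t x y * Fm m y)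
          (𝓝[>] 0) (𝓝 (Ψm m t x))) ∧
      TendstoLocallyUniformlyOn (fun m (p : τ × ℝ) => Ψm m p.1 p.2) (fun p => Ψ p.1 p.2)
        l (S ×ˢ univ) := by
  have hamp {t x H} (ht : t ∈ S) (hH : MemCnR n β H) := (hGt t ht x).cnRBound.mul hH.cnRBound
  have hlim {H} (hH : MemCnR n β H) {t} (ht : t ∈ S) (x : ℝ) :
      Tendsto (fun ε : ℝ => ∫ y : ℝ, Complex.exp (-(ε : ℂ) * y ^ 2) * G t x y * H y)
        (𝓝[>] 0) (𝓝 (oscIntegral n (a t) x fun y => Gt t x y * H y)) := by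
    simpa only [hdecomp t ht x, mul_assoc] using
      tendsto_integral_gaussian_cutoff (ha₀ t ht) (by linarith) (hamp ht hH) x
  refine ⟨fun t x => oscIntegral n (a t) x fun y => Gt t x y * F y,
    fun m t x => oscIntegral n (a t) x fun y => Gt t x y * Fm m y,
    fun t ht x => hlim hF ht x, fun m t ht x => hlim (hFm m) ht x,
    Metric.tendstoLocallyUniformlyOn_iff.2 ?_⟩
  rintro ε hε ⟨t₀, x₀⟩ ⟨ht₀, -⟩
  obtain ⟨M, hM⟩ := hbdd t₀ ht₀ x₀
  obtain ⟨C, hC⟩ := exists_eventually_norm_oscIntegral_mul_le ha ha₀ hn hGt ht₀ hM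
  have hsmall : ∀ᶠ m in l, C * CnRNorm n β (fun y => F y - Fm m y) < ε :=
    (hconv.const_mul C).eventually_lt_const (by rwa [mul_zero])
  refine ⟨_, hC.and self_mem_nhdsWithin, ?_⟩
  filter_upwards [hsmall] with m hm
  rintro ⟨t, x⟩ ⟨hCp, ht, -⟩
  rw [dist_eq_norm, ← oscIntegral_sub (ha₀ t ht) (by linarith) (hamp ht hF) (hamp ht (hFm m))]
  simp only [← mul_sub]
  exact (hCp _ (hF.sub (hFm m))).trans_lt hm

/-- continuous dependence of the solution on the initial condition: if
`F_m → F` in `C^n(ℝ,r^β)` then `Ψ(t,x;F_m) → Ψ(t,x;F)` locally uniformly on `(0,T)×ℝ`. -/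
theorem stmt18 (T : ℝ≥0∞) (hT : 0 < T) (S : Set ℝ)
    (hS : S = {t : ℝ | 0 < t ∧ ENNReal.ofReal t < T})
    (V : ℝ → ℝ → ℂ) (hV : Measurable fun p : ℝ × ℝ => V p.1 p.2)
    (G : ℝ → ℝ → ℝ → ℂ)
    (hGAC : ∀ y : ℝ, MemAC12 S (fun t x => G t x y))
    (hGeq : ∀ y : ℝ, ∀ᵐ t ∂(volume : Measure ℝ), t ∈ S → ∀ x : ℝ,
      Complex.I * deriv (fun τ => G τ x y) t =
        -(deriv (deriv (fun ξ => G t ξ y)) x) + V t x * G t x y)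
    (hGinit : ∀ x₀ : ℝ, 0 < x₀ → ∀ φ : ℝ → ℂ, ContDiffOn ℝ 1 φ (Set.Icc (-x₀) x₀) →
      ∀ x ∈ Set.Ioo (-x₀) x₀,
        Tendsto (fun t => ∫ y in (-x₀)..x₀, G t x y * φ y) (𝓝[S] 0) (𝓝 (φ x)))
    (a : ℝ → ℝ) (haAC : IsACOn S a) (hapos : ∀ t ∈ S, 0 < a t)
    (hainf : Tendsto a (𝓝[S] 0) atTop)
    (Gt : ℝ → ℝ → ℝ → ℂ)
    (hdecomp : ∀ t ∈ S, ∀ x y : ℝ,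
      G t x y = Complex.exp (Complex.I * a t * ((y : ℂ) - x) ^ 2) * Gt t x y)
    (n : ℕ) (α : ℝ) (hα : 0 ≤ α) (hn : α + 3 < n)
    (hreg : ∀ t ∈ S, ∀ x : ℝ,
      MemCnR n α (fun y => Gt t x y) ∧
      MemCnR n (α + 1) (fun y => deriv (fun ξ => Gt t ξ y) x) ∧
      MemCnR n (α + 2) (fun y => deriv (deriv (fun ξ => Gt t ξ y)) x) ∧
      MemCnR n (α + 2) (fun y => deriv (fun τ => Gt τ x y) t))
    (hbdd : ∀ t ∈ S, ∀ x : ℝ, ∃ M : ℝ, ∀ᶠ p in 𝓝[S ×ˢ (Set.univ : Set ℝ)] (t, x),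
      CnRNorm n α (fun y => Gt p.1 p.2 y) ≤ M ∧
      CnRNorm n (α + 1) (fun y => deriv (fun ξ => Gt p.1 ξ y) p.2) ≤ M ∧
      CnRNorm n (α + 2) (fun y => deriv (deriv (fun ξ => Gt p.1 ξ y)) p.2) ≤ M ∧
      CnRNorm n (α + 2) (fun y => deriv (fun τ => Gt τ p.2 y) p.1) ≤ M)
    (hinit0 : ∀ x : ℝ,
      Tendsto (fun t => CnRNorm n α (fun y => Gt t x y) / a t) (𝓝[S] 0) (𝓝 0))
    (β : ℝ) (hβ0 : 0 ≤ β) (hβ : β < (n : ℝ) - α - 3)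
    (F : ℝ → ℂ) (hF : MemCnR n β F) (Fm : ℕ → ℝ → ℂ) (hFm : ∀ m, MemCnR n β (Fm m))
    (hconv : Tendsto (fun m => CnRNorm n β (fun y => F y - Fm m y)) atTop (𝓝 0)) :
    ∃ (Ψ : ℝ → ℝ → ℂ) (Ψm : ℕ → ℝ → ℝ → ℂ),
      (∀ t ∈ S, ∀ x : ℝ,
        Tendsto (fun ε : ℝ => ∫ y : ℝ, Complex.exp (-(ε : ℂ) * y ^ 2) * G t x y * F y)
          (𝓝[>] 0) (𝓝 (Ψ t x))) ∧
      (∀ m, ∀ t ∈ S, ∀ x : ℝ,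
        Tendsto (fun ε : ℝ => ∫ y : ℝ, Complex.exp (-(ε : ℂ) * y ^ 2) * G t x y * Fm m y)
          (𝓝[>] 0) (𝓝 (Ψm m t x))) ∧
      TendstoLocallyUniformlyOn (fun m (p : ℝ × ℝ) => Ψm m p.1 p.2) (fun p => Ψ p.1 p.2)
        atTop (S ×ˢ (Set.univ : Set ℝ)) := by
  have hS_open : IsOpen S := by
    rw [hS]
    exact isOpen_Ioi.inter (isOpen_Iio.preimage ENNReal.continuous_ofReal)
  exact stmt18_general (haAC.continuousOn hS_open) (fun t ht => (hapos t ht).ne') hdecomp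
    (by linarith) (fun t ht x => (hreg t ht x).1)
    (fun t ht x => (hbdd t ht x).imp fun M hM => hM.mono fun p hp => hp.1) hF hFm hconv
end
end
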